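/- For every inverse temperature β ∈ (0,∞) and every exponent q ∈ (0,2), with range exponent α = 2 + q/2, there exists a constant c_β > 0 (depending only on β and q) such that for every integer N ≥ 2, the variance of the height at the origin under the discrete q-SOS long-range chain satisfies c_β N/(ln N)^{2/q} ≤ Var^{q-SOS}_{N,β,2+q/2}[φ(0)]. -/

import Mathlib

noncomputable section

/-- Configurations of the long-range chain of length `N`: integer-valued height functions
on `ℤ` vanishing outside `{-N, …, N}`. -/
def ChainConfig (N : ℕ) : Type :=
  {φ : ℤ → ℤ // ∀ k : ℤ, (N : ℤ) < |k| → φ k = 0}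

/-- Energy `β ∑_{i ≠ j} |φ(i) − φ(j)|^q / |i − j|^α` of a configuration of the long-range
chain with potential exponent `q` and range exponent `α`. -/
def chainEnergy (β α q : ℝ) (φ : ℤ → ℤ) : ℝ :=
  β * ∑' p : ℤ × ℤ,
      if p.1 = p.2 then 0
      else |((φ p.1 - φ p.2 : ℤ) : ℝ)| ^ q / |((p.1 - p.2 : ℤ) : ℝ)| ^ α

/-- Boltzmann weight of a configuration. -/
def chainWeight (β α q : ℝ) (φ : ℤ → ℤ) : ℝ :=
  Real.exp (-chainEnergy β α q φ)

/-- Partition function of the long-range chain. -/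
def chainZ (N : ℕ) (β α q : ℝ) : ℝ :=
  ∑' φ : ChainConfig N, chainWeight β α q φ.val

/-- Mean of the height at the origin. -/
def chainMean (N : ℕ) (β α q : ℝ) : ℝ :=
  (∑' φ : ChainConfig N, ((φ.val 0 : ℤ) : ℝ) * chainWeight β α q φ.val) / chainZ N β α q

/-- Variance of the height at the origin under the long-range chain `μ_{N,β,α}`
(with potential exponent `q`; `q = 2` is the discrete Gaussian chain,
`q ∈ (0,2)` the `q`-SOS chain). -/
def chainVar (N : ℕ) (β α q : ℝ) : ℝ :=
  (∑' φ : ChainConfig N, ((φ.val 0 : ℤ) : ℝ) ^ 2 * chainWeight β α q φ.val) / chainZ N β α q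
    - chainMean N β α q ^ 2

end

/-!
For `0 < θ < 1` the function `exp (-c * t ^ θ)` is the Laplace transform of a positive stable law,
so with `θ = q / 2` the chain is a mixture of discrete Gaussian chains with random couplings. For a
Gaussian weight, Ginibre's duplication of variables bounds the second moment of `φ 0` from below
by its second moment on a subgroup of configurations, even after the energy has been increased there
by a form `R` for which `exp (-R)` is positive definite. The subgroup consists of the radial step
functions with independent integer drops at the radii `k * ℓ`, `k ≤ m`, and the Cauchy–Schwarz
inequality, whose defect is a sum of squares, replaces the energy by a diagonal form. Then `φ 0` is
a sum of `m` independent discrete Gaussians. Larger couplings give both a smaller weight and a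
smaller bound, so Chebyshev's association inequality lets the bound be averaged over the couplings.

After averaging, each drop contributes `exp (-C)` where `C` bounds the sum over pairs of sites
separated by a given radius of `β n ^ θ / |i - j| ^ (2 + θ)`, with `n ≤ |i - j| / ℓ + 1` the number
of radii separating the pair. This sum is of order `1 + ℓ ^ (-θ) log N`, which is bounded
for `ℓ` of order `(log N) ^ (1 / θ)`, and leaves `m` of order `N / (log N) ^ (2 / q)`.
-/

open Filter Topology MeasureTheory

section PositiveDefinite

lemma posSemidef_sum_nonneg {A : Type*} {M : Matrix A A ℝ} (hM : M.PosSemidef) (s : Finset A)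
    (c : A → ℝ) : 0 ≤ ∑ a ∈ s, ∑ b ∈ s, c a * M a b * c b := by
  have h := (hM.submatrix ((↑) : s → A)).dotProduct_mulVec_nonneg fun a => c a
  simp only [dotProduct, Matrix.mulVec, Matrix.submatrix_apply, Pi.star_apply, star_trivial,
    Finset.mul_sum, ← mul_assoc] at h
  rw [← Finset.sum_coe_sort]
  simpa only [← Finset.sum_coe_sort s] using h

lemma posSemidef_tsum_nonneg {A : Type*} {M : Matrix A A ℝ} (hM : M.PosSemidef) (c : A → ℝ) :
    0 ≤ ∑' p : A × A, c p.1 * M p.1 p.2 * c p.2 := by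
  by_cases hs : Summable fun p : A × A => c p.1 * M p.1 p.2 * c p.2
  · have hsquares := hs.hasSum.comp (tendsto_finsetProd_atTop.comp tendsto_atTop_diagonal)
    refine ge_of_tendsto' hsquares fun s => ?_
    rw [Function.comp_apply, Function.comp_apply, Finset.sum_product]
    exact posSemidef_sum_nonneg hM s c
  · rw [tsum_eq_zero_of_not_summable hs]

variable {G H : Type*} [AddCommGroup G] [AddCommGroup H]

/-- Real-valued positive definite functions on an abelian group: those `f` for which the kernel
`f (x - y)` is positive semidefinite. -/
def IsPosDefFun (f : H → ℝ) : Prop :=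
  (Matrix.of fun x y => f (x - y)).PosSemidef

namespace IsPosDefFun

lemma const_one : IsPosDefFun fun _ : H => (1 : ℝ) := by
  have hones := (Matrix.PosSemidef.one (n := Unit) (R := ℝ)).submatrix fun _ : H => ()
  exact hones

lemma mul {f g : H → ℝ} (hf : IsPosDefFun f) (hg : IsPosDefFun g) :
    IsPosDefFun fun x => f x * g x :=
  hf.hadamard hg

lemma prod {J : Type*} {f : J → H → ℝ} (s : Finset J) (hf : ∀ j ∈ s, IsPosDefFun (f j)) :
    IsPosDefFun fun x => ∏ j ∈ s, f j x := by
  classical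
  induction s using Finset.induction_on with
  | empty => simpa using const_one
  | insert j s hj ih =>
    simp_rw [Finset.prod_insert hj]
    exact (hf j (s.mem_insert_self j)).mul (ih fun i hi => hf i (Finset.mem_insert_of_mem hi))

lemma comp_addMonoidHom {f : H → ℝ} (hf : IsPosDefFun f) (u : G →+ H) :
    IsPosDefFun fun x => f (u x) := by
  unfold IsPosDefFun
  simp_rw [map_sub]
  exact hf.submatrix u

lemma integral {Ω : Type*} [MeasurableSpace Ω] {μ : Measure Ω} {F : Ω → H → ℝ}
    (hF : ∀ ω, IsPosDefFun (F ω)) (hinteg : ∀ x, Integrable (fun ω => F ω x) μ) :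
    IsPosDefFun fun x => ∫ ω, F ω x ∂μ := by
  refine ⟨?_, fun c => ?_⟩
  · ext x y
    exact integral_congr_ae (.of_forall fun ω => (hF ω).1.apply x y)
  · simp only [Finsupp.sum, star_trivial, Matrix.of_apply, ← integral_const_mul,
      ← integral_mul_const]
    have hterm (x y : H) : Integrable (fun ω => c x * F ω (x - y) * c y) μ :=
      ((hinteg (x - y)).const_mul _).mul_const _
    simp_rw [← integral_finsetSum _ fun y _ => hterm _ y]
    rw [← integral_finsetSum _ fun x _ => integrable_finsetSum _ fun y _ => hterm x y]
    exact integral_nonneg fun ω => posSemidef_sum_nonneg (hF ω) c.support c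

lemma cos_mul (a : ℝ) : IsPosDefFun fun x : ℝ => Real.cos (a * x) := by
  refine ⟨?_, fun c => ?_⟩
  · ext x y
    simp [← Real.cos_neg (a * (x - y)), ← mul_neg]
  · have hsquares : (c.sum fun x cx => c.sum fun y cy => star cx * Real.cos (a * (x - y)) * cy)
        = (c.sum fun x cx => cx * Real.cos (a * x)) ^ 2
          + (c.sum fun x cx => cx * Real.sin (a * x)) ^ 2 := by
      simp only [Finsupp.sum, sq, Finset.sum_mul_sum, ← Finset.sum_add_distrib, star_trivial,
        mul_sub, Real.cos_sub]
      exact Finset.sum_congr rfl fun x _ => Finset.sum_congr rfl fun y _ => by ring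
    simp only [Matrix.of_apply, hsquares]
    positivity

end IsPosDefFun

lemma integrable_cos_mul (μ : Measure ℝ) [IsFiniteMeasure μ] (x : ℝ) :
    Integrable (fun a => Real.cos (a * x)) μ :=
  (integrable_const (1 : ℝ)).mono' (by fun_prop) (.of_forall fun _ => Real.abs_cos_le_one _)

lemma integral_cos_mul_gaussianReal {t : ℝ} (ht : 0 ≤ t) (x : ℝ) :
    ∫ a, Real.cos (a * x) ∂(ProbabilityTheory.gaussianReal 0 (2 * t).toNNReal)
      = Real.exp (-(t * x ^ 2)) := by
  have hchar := ProbabilityTheory.charFun_gaussianReal (μ := 0) (v := (2 * t).toNNReal) x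
  have hphase (a : ℝ) : (x : ℂ) * a * Complex.I = ((a * x : ℝ) : ℂ) * Complex.I := by
    push_cast; ring
  have hexponent : (x : ℂ) * (0 : ℝ) * Complex.I - ((2 * t).toNNReal : ℝ) * x ^ 2 / 2
      = ((-(t * x ^ 2) : ℝ) : ℂ) := by
    rw [Real.coe_toNNReal _ (by positivity)]
    push_cast; ring
  rw [charFun_apply_real, hexponent] at hchar
  simp_rw [hphase] at hchar
  have hre := congrArg Complex.re hchar
  rw [← RCLike.re_eq_complex_re, ← integral_re, ← Complex.ofReal_exp] at hre
  · simpa only [RCLike.re_eq_complex_re, Complex.exp_ofReal_mul_I_re, Complex.ofReal_re] using hre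
  · exact (integrable_const (1 : ℝ)).mono' (by fun_prop)
      (.of_forall fun a => (Complex.norm_exp_ofReal_mul_I _).le)

lemma isPosDefFun_exp_neg_mul_sq {t : ℝ} (ht : 0 ≤ t) :
    IsPosDefFun fun x : ℝ => Real.exp (-(t * x ^ 2)) := by
  simp_rw [← integral_cos_mul_gaussianReal ht]
  exact IsPosDefFun.integral IsPosDefFun.cos_mul (integrable_cos_mul _)

end PositiveDefinite

section Ginibre

lemma hasSum_mul_prod {A B : Type*} {f : A → ℝ} {g : B → ℝ} {a b : ℝ} (hf : HasSum f a)
    (hg : HasSum g b) : HasSum (fun p : A × B => f p.1 * g p.2) (a * b) :=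
  hf.mul hg (summable_mul_of_summable_norm hf.summable.norm hg.summable.norm)

variable {G H : Type*} [AddCommGroup G] [AddCommGroup H] {l : H →+ G}

lemma injective_add_sub [IsAddTorsionFree G] (hl : Function.Injective l) :
    Function.Injective fun p : G × H => (p.1 + l p.2, p.1 - l p.2) := by
  rintro ⟨a, X⟩ ⟨b, Y⟩ h
  obtain ⟨hadd, hsub⟩ := Prod.mk.inj h
  have hab : a = b := nsmul_right_injective two_ne_zero <| by
    linear_combination (norm := module) hadd + hsub
  subst hab
  exact Prod.ext rfl (hl (add_left_cancel hadd))

lemma exists_half_sub_section (l : H →+ G) :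
    ∃ r : G → H, ∀ a b, a - b ∈ (l + l).range → l (r a - r b) + l (r a - r b) = a - b := by
  have hhalf (a : G) : ∃ X, l X + l X = a - (a : G ⧸ (l + l).range).out := by
    obtain ⟨X, hX⟩ := QuotientAddGroup.eq.1 (Quotient.out_eq (a : G ⧸ (l + l).range))
    exact ⟨X, by simpa [sub_eq_neg_add] using hX⟩
  choose r hr using hhalf
  refine ⟨r, fun a b hab => ?_⟩
  have hcoset : (a : G ⧸ (l + l).range) = b :=
    (QuotientAddGroup.eq.2 (by simpa [sub_eq_neg_add] using hab)).symm
  have ha := hr a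
  rw [hcoset] at ha
  rw [map_sub]
  linear_combination (norm := module) ha - hr b

lemma exists_posSemidef_add_sub [IsAddTorsionFree G] (hl : Function.Injective l) {w : H → ℝ}
    (hw : IsPosDefFun w) :
    ∃ M : Matrix G G ℝ, M.PosSemidef ∧ (∀ a X, M (a + l X) (a - l X) = w X) ∧
      ∀ p : G × G, p ∉ Set.range (fun q : G × H => (q.1 + l q.2, q.1 - l q.2)) →
        M p.1 p.2 = 0 := by
  classical
  obtain ⟨r, hr⟩ := exists_half_sub_section l
  let coset : G → G ⧸ (l + l).range := QuotientAddGroup.mk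
  have hcoset (a b : G) : coset a = coset b ↔ a - b ∈ (l + l).range := by
    rw [eq_comm, QuotientAddGroup.eq, sub_eq_neg_add]
  refine ⟨_, (Matrix.PosSemidef.one.submatrix coset).hadamard (hw.submatrix r), ?_, ?_⟩
  · intro a X
    have hmem : a + l X - (a - l X) ∈ (l + l).range := ⟨X, by simp⟩
    have hX : r (a + l X) - r (a - l X) = X := hl <| nsmul_right_injective two_ne_zero <| by
      linear_combination (norm := module) hr _ _ hmem
    simp [Matrix.one_apply, (hcoset _ _).2 hmem, hX]
  · rintro ⟨a, b⟩ hp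
    have hmem : a - b ∉ (l + l).range := fun hmem => hp ⟨(b + l (r a - r b), r a - r b),
      Prod.ext (by linear_combination (norm := module) hr a b hmem) (by simp)⟩
    simp [(hcoset a b).not.2 hmem]

/-- Ginibre's duplication: in the variables `a + l X`, `a - l X` the difference of the two sides is
a positive semidefinite form, because the parallelogram law factorises `Q a + Q (l X)`. -/
theorem ginibre_secondMoment_le [IsAddTorsionFree G] (hl : Function.Injective l) (f : G →+ ℝ)
    {Q : G → ℝ} (hQ : ∀ a b, Q (a + b) + Q (a - b) = 2 * Q a + 2 * Q b) {w : H → ℝ}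
    (hw : IsPosDefFun w) (hs : Summable fun a => Real.exp (-Q a))
    (hsf : Summable fun a => f a ^ 2 * Real.exp (-Q a))
    (hsw : Summable fun X => Real.exp (-Q (l X)) * w X)
    (hswf : Summable fun X => f (l X) ^ 2 * (Real.exp (-Q (l X)) * w X)) :
    (∑' a, Real.exp (-Q a)) * ∑' X, f (l X) ^ 2 * (Real.exp (-Q (l X)) * w X)
      ≤ (∑' a, f a ^ 2 * Real.exp (-Q a)) * ∑' X, Real.exp (-Q (l X)) * w X := by
  obtain ⟨M, hM, hMdiag, hMzero⟩ := exists_posSemidef_add_sub hl hw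
  have hdiff := (hasSum_mul_prod hsf.hasSum hsw.hasSum).sub
    (hasSum_mul_prod hs.hasSum hswf.hasSum)
  let c (a : G) : ℝ := f a * Real.exp (-(Q a / 2))
  have hsubst (p : G × H) : c (p.1 + l p.2) * M (p.1 + l p.2) (p.1 - l p.2) * c (p.1 - l p.2)
      = f p.1 ^ 2 * Real.exp (-Q p.1) * (Real.exp (-Q (l p.2)) * w p.2)
        - Real.exp (-Q p.1) * (f (l p.2) ^ 2 * (Real.exp (-Q (l p.2)) * w p.2)) := by
    have hexp : Real.exp (-Q p.1) * Real.exp (-Q (l p.2))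
        = Real.exp (-(Q (p.1 + l p.2) / 2)) * Real.exp (-(Q (p.1 - l p.2) / 2)) := by
      rw [← Real.exp_add, ← Real.exp_add]
      congr 1
      linarith [hQ p.1 (l p.2)]
    rw [hMdiag]
    simp only [c, map_add, map_sub]
    linear_combination (-(f p.1 ^ 2 - f (l p.2) ^ 2) * w p.2) * hexp
  have hpairs := ((injective_add_sub hl).hasSum_iff
    (f := fun p : G × G => c p.1 * M p.1 p.2 * c p.2) fun p hp => by simp [hMzero p hp]).1
    (hdiff.congr_fun fun p => (hsubst p))
  have hnonneg := posSemidef_tsum_nonneg hM c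
  rw [hpairs.tsum_eq] at hnonneg
  linarith

end Ginibre

section SecondMoment

/-- The weight `w` gives `f` a second moment of at least `r`, with the normalisation multiplied
out. -/
def SecondMomentBound {A : Type*} (f w : A → ℝ) (r : ℝ) : Prop :=
  r * ∑' a, w a ≤ ∑' a, f a ^ 2 * w a

variable {A : Type*} {f w w' : A → ℝ}

lemma summable_of_one_add_sq_mul (hw : ∀ a, 0 ≤ w a)
    (hs : Summable fun a => (1 + f a ^ 2) * w a) : Summable w :=
  hs.of_nonneg_of_le hw fun a => le_mul_of_one_le_left (hw a) (by nlinarith [sq_nonneg (f a)])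

lemma summable_sq_mul_of_one_add_sq_mul (hw : ∀ a, 0 ≤ w a)
    (hs : Summable fun a => (1 + f a ^ 2) * w a) : Summable fun a => f a ^ 2 * w a :=
  hs.of_nonneg_of_le (fun a => mul_nonneg (sq_nonneg _) (hw a))
    fun a => mul_le_mul_of_nonneg_right (by linarith) (hw a)

lemma summable_one_add_sq_mul_of_le (hw' : ∀ a, 0 ≤ w' a) (hle : ∀ a, w' a ≤ w a)
    (hs : Summable fun a => (1 + f a ^ 2) * w a) : Summable fun a => (1 + f a ^ 2) * w' a :=
  hs.of_nonneg_of_le (fun a => mul_nonneg (by positivity) (hw' a))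
    fun a => mul_le_mul_of_nonneg_left (hle a) (by positivity)

lemma SecondMomentBound.of_tendsto {ι : Type*} {L : Filter ι} [L.NeBot] {w : ι → A → ℝ}
    {w₀ bound : A → ℝ} {r : ι → ℝ} {r₀ : ℝ} (hb : ∀ i, SecondMomentBound f (w i) (r i))
    (hs : Summable fun a => (1 + f a ^ 2) * bound a)
    (hw : ∀ i a, 0 ≤ w i a) (hbound : ∀ i a, w i a ≤ bound a)
    (hlim : ∀ a, Tendsto (fun i => w i a) L (𝓝 (w₀ a))) (hr : Tendsto r L (𝓝 r₀)) :
    SecondMomentBound f w₀ r₀ := by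
  obtain ⟨i₀⟩ := L.nonempty_of_neBot
  have hbound0 (a : A) : 0 ≤ bound a := (hw i₀ a).trans (hbound i₀ a)
  have hmass : Tendsto (fun i => ∑' a, w i a) L (𝓝 (∑' a, w₀ a)) :=
    tendsto_tsum_of_dominated_convergence (summable_of_one_add_sq_mul hbound0 hs) hlim
      (.of_forall fun i a => by simpa [abs_of_nonneg (hw i a)] using hbound i a)
  have hmoment : Tendsto (fun i => ∑' a, f a ^ 2 * w i a) L (𝓝 (∑' a, f a ^ 2 * w₀ a)) :=
    tendsto_tsum_of_dominated_convergence (summable_sq_mul_of_one_add_sq_mul hbound0 hs)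
      (fun a => (hlim a).const_mul _) (.of_forall fun i a => by
        simpa [abs_of_nonneg (hw i a)] using mul_le_mul_of_nonneg_left (hbound i a) (sq_nonneg _))
  exact le_of_tendsto_of_tendsto' (hr.mul hmass) hmoment hb

/-- Chebyshev's association inequality for a two-point mixture: the heavier weight `w` comes with
the larger bound `r`. -/
lemma SecondMomentBound.mixture {r r' p : ℝ} (h : SecondMomentBound f w r)
    (h' : SecondMomentBound f w' r') (hp₀ : 0 ≤ p) (hp₁ : p ≤ 1) (hw' : ∀ a, 0 ≤ w' a)
    (hle : ∀ a, w' a ≤ w a) (hr : r' ≤ r) (hs : Summable fun a => (1 + f a ^ 2) * w a) :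
    SecondMomentBound f (fun a => (1 - p) * w a + p * w' a) ((1 - p) * r + p * r') := by
  have hw (a : A) : 0 ≤ w a := (hw' a).trans (hle a)
  have hs' := summable_one_add_sq_mul_of_le hw' hle hs
  have hsum := summable_of_one_add_sq_mul hw hs
  have hsum' := summable_of_one_add_sq_mul hw' hs'
  have hsq := summable_sq_mul_of_one_add_sq_mul hw hs
  have hsq' := summable_sq_mul_of_one_add_sq_mul hw' hs'
  have hmass : ∑' a, w' a ≤ ∑' a, w a := hsum'.tsum_le_tsum hle hsum
  unfold SecondMomentBound at *
  simp_rw [mul_add, mul_left_comm (f _ ^ 2)]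
  rw [(hsum.mul_left _).tsum_add (hsum'.mul_left _), (hsq.mul_left _).tsum_add (hsq'.mul_left _)]
  simp_rw [tsum_mul_left]
  nlinarith [mul_le_mul_of_nonneg_left h (sub_nonneg.2 hp₁), mul_le_mul_of_nonneg_left h' hp₀,
    mul_nonneg (mul_nonneg hp₀ (sub_nonneg.2 hp₁))
      (mul_nonneg (sub_nonneg.2 hmass) (sub_nonneg.2 hr))]

end SecondMoment

section IntegerGaussian

lemma hasSum_prod_pi_fin {A : Type*} : ∀ {n : ℕ} {f : Fin n → A → ℝ}, (∀ i, Summable (f i)) →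
    HasSum (fun X : Fin n → A => ∏ i, f i (X i)) (∏ i, ∑' x, f i x)
  | 0, _, _ => by
    simp only [Finset.univ_eq_empty, Finset.prod_empty]
    exact hasSum_unique fun _ : Fin 0 → A => (1 : ℝ)
  | n + 1, f, hf => by
    have hcons := hasSum_mul_prod (hf 0).hasSum (hasSum_prod_pi_fin fun i => hf i.succ)
    rw [Fin.prod_univ_succ, ← (Fin.consEquiv fun _ : Fin (n + 1) => A).hasSum_iff]
    simpa only [Function.comp_def, Fin.prod_univ_succ, Fin.consEquiv, Equiv.coe_fn_mk,
      Fin.cons_zero, Fin.cons_succ] using hcons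

lemma hasSum_prod_pi {A I : Type*} [Fintype I] {f : I → A → ℝ} (hf : ∀ i, Summable (f i)) :
    HasSum (fun X : I → A => ∏ i, f i (X i)) (∏ i, ∑' x, f i x) := by
  let e := (Fintype.equivFin I).symm
  have h := hasSum_prod_pi_fin fun j => hf (e j)
  rw [← (e.symm.arrowCongr (Equiv.refl A)).hasSum_iff] at h
  convert h using 1
  · ext X
    simp [← e.prod_comp]
  · rw [e.prod_comp fun i => ∑' x, f i x]

lemma summable_one_add_sq_mul_exp_neg_rpow {c p : ℝ} (hc : 0 < c) (hp : 0 < p) :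
    Summable fun x : ℤ => (1 + (x : ℝ) ^ 2) * Real.exp (-(c * |(x : ℝ)| ^ p)) := by
  have hdecay : Tendsto (fun x : ℝ => x ^ 4 * Real.exp (-(c * x ^ p))) atTop (𝓝 0) := by
    refine ((tendsto_rpow_mul_exp_neg_mul_atTop_nhds_zero (4 / p) c hc).comp
      (tendsto_rpow_atTop hp)).congr' ?_
    filter_upwards [eventually_ge_atTop 0] with x hx
    rw [Function.comp_apply, ← Real.rpow_mul hx, mul_div_cancel₀ _ hp.ne', neg_mul]
    norm_cast
  have hnat : Summable fun n : ℕ => (1 + (n : ℝ) ^ 2) * Real.exp (-(c * (n : ℝ) ^ p)) := by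
    refine Summable.of_norm_bounded_eventually_nat
      ((Real.summable_one_div_nat_pow.2 one_lt_two).mul_left 2) ?_
    filter_upwards [(hdecay.comp tendsto_natCast_atTop_atTop).eventually (ge_mem_nhds one_pos),
      eventually_ge_atTop 1] with n hn hn1
    rw [Real.norm_of_nonneg (by positivity), mul_one_div, le_div_iff₀ (by positivity)]
    have hsq : (1 : ℝ) ≤ (n : ℝ) ^ 2 := one_le_pow₀ (by exact_mod_cast hn1)
    calc (1 + (n : ℝ) ^ 2) * Real.exp (-(c * (n : ℝ) ^ p)) * (n : ℝ) ^ 2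
        = (1 + (n : ℝ) ^ 2) * (n : ℝ) ^ 2 * Real.exp (-(c * (n : ℝ) ^ p)) := by ring
      _ ≤ 2 * (n : ℝ) ^ 4 * Real.exp (-(c * (n : ℝ) ^ p)) := by gcongr ?_ * _; nlinarith
      _ ≤ 2 := by rw [mul_assoc]; exact (mul_le_iff_le_one_right two_pos).2 hn
  exact .of_nat_of_neg (by simpa using hnat) (by simpa using hnat)

lemma summable_one_add_sq_mul_exp_neg_mul_sq {κ : ℝ} (hκ : 0 < κ) :
    Summable fun x : ℤ => (1 + (x : ℝ) ^ 2) * Real.exp (-(κ * (x : ℝ) ^ 2)) := by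
  simpa using summable_one_add_sq_mul_exp_neg_rpow hκ two_pos

lemma summable_exp_neg_mul_int_sq {κ : ℝ} (hκ : 0 < κ) :
    Summable fun x : ℤ => Real.exp (-(κ * (x : ℝ) ^ 2)) :=
  summable_of_one_add_sq_mul (fun _ => Real.exp_nonneg _)
    (summable_one_add_sq_mul_exp_neg_mul_sq hκ)

lemma summable_int_sq_mul_exp_neg_mul_sq {κ : ℝ} (hκ : 0 < κ) :
    Summable fun x : ℤ => (x : ℝ) ^ 2 * Real.exp (-(κ * (x : ℝ) ^ 2)) :=
  summable_sq_mul_of_one_add_sq_mul (fun _ => Real.exp_nonneg _)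
    (summable_one_add_sq_mul_exp_neg_mul_sq hκ)

lemma tsum_exp_neg_mul_int_sq_le {κ : ℝ} (hκ : 0 < κ) :
    ∑' x : ℤ, Real.exp (-(κ * (x : ℝ) ^ 2))
      ≤ ∑' x : ℤ, (x : ℝ) ^ 2 * Real.exp (-(κ * (x : ℝ) ^ 2)) + 1 := by
  have hdelta := hasSum_ite_eq (0 : ℤ) (1 : ℝ)
  have hsq := summable_int_sq_mul_exp_neg_mul_sq hκ
  rw [← hdelta.tsum_eq, ← hsq.tsum_add hdelta.summable]
  refine (summable_exp_neg_mul_int_sq hκ).tsum_le_tsum (fun x => ?_) (hsq.add hdelta.summable)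
  rcases eq_or_ne x 0 with rfl | hx
  · simp
  · have hone : (1 : ℝ) ≤ (x : ℝ) ^ 2 := by
      exact_mod_cast Int.add_one_le_iff.2 (sq_pos_of_ne_zero hx)
    simpa [hx] using le_mul_of_one_le_left (Real.exp_nonneg _) hone

lemma two_mul_exp_neg_le_tsum_int_sq {κ : ℝ} (hκ : 0 < κ) :
    2 * Real.exp (-κ) ≤ ∑' x : ℤ, (x : ℝ) ^ 2 * Real.exp (-(κ * (x : ℝ) ^ 2)) := by
  have h := (summable_int_sq_mul_exp_neg_mul_sq hκ).sum_le_tsum ({1, -1} : Finset ℤ)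
    fun x _ => by positivity
  rw [Finset.sum_pair (by norm_num)] at h
  norm_num at h
  linarith

lemma secondMomentBound_int_gaussian {κ : ℝ} (hκ : 0 < κ) :
    SecondMomentBound (fun x : ℤ => (x : ℝ)) (fun x => Real.exp (-(κ * (x : ℝ) ^ 2)))
      (2 / 3 * Real.exp (-κ)) := by
  have hexp : Real.exp (-κ) ≤ 1 := Real.exp_le_one_iff.2 (by linarith)
  unfold SecondMomentBound
  nlinarith [tsum_exp_neg_mul_int_sq_le hκ, two_mul_exp_neg_le_tsum_int_sq hκ, Real.exp_pos (-κ)]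

variable {K : Type*} [Fintype K] {κ : K → ℝ}

/-- Unnormalised density of independent centred discrete Gaussians with precisions `2 * κ k`. -/
noncomputable def diagGaussian (κ : K → ℝ) (X : K → ℤ) : ℝ :=
  Real.exp (-∑ k, κ k * (X k : ℝ) ^ 2)

lemma diagGaussian_pos (κ : K → ℝ) (X : K → ℤ) : 0 < diagGaussian κ X :=
  Real.exp_pos _

lemma summable_diagGaussian (hκ : ∀ k, 0 < κ k) : Summable (diagGaussian κ) := by
  refine (hasSum_prod_pi fun k => summable_exp_neg_mul_int_sq (hκ k)).summable.congr fun X => ?_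
  rw [diagGaussian, ← Finset.sum_neg_distrib, Real.exp_sum]

lemma hasSum_apply_mul_diagGaussian [DecidableEq K] (hκ : ∀ k, 0 < κ k) (k : K) {g : ℤ → ℝ}
    (hg : Summable fun x => g x * Real.exp (-(κ k * (x : ℝ) ^ 2))) :
    HasSum (fun X : K → ℤ => g (X k) * diagGaussian κ X)
      ((∑' x, g x * Real.exp (-(κ k * (x : ℝ) ^ 2)))
        * ∑' Y, diagGaussian (fun j : {j // j ≠ k} => κ j) Y) := by
  have hsplit := hasSum_mul_prod hg.hasSum
    (summable_diagGaussian (κ := fun j : {j // j ≠ k} => κ j) fun j => hκ j).hasSum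
  rw [← (Equiv.funSplitAt k ℤ).hasSum_iff] at hsplit
  convert hsplit using 2 with X
  simp only [Function.comp_apply, diagGaussian, Fintype.sum_eq_add_sum_subtype_ne _ k, neg_add,
    Real.exp_add, Equiv.funSplitAt_apply]
  ring

lemma summable_sq_apply_mul_diagGaussian (hκ : ∀ k, 0 < κ k) (k : K) :
    Summable fun X : K → ℤ => (X k : ℝ) ^ 2 * diagGaussian κ X := by
  classical
  exact (hasSum_apply_mul_diagGaussian hκ k (g := fun x => (x : ℝ) ^ 2)
    (summable_int_sq_mul_exp_neg_mul_sq (hκ k))).summable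

lemma secondMomentBound_apply_diagGaussian (hκ : ∀ k, 0 < κ k) (k : K) :
    SecondMomentBound (fun X : K → ℤ => (X k : ℝ)) (diagGaussian κ)
      (2 / 3 * Real.exp (-κ k)) := by
  classical
  have hmass := (hasSum_apply_mul_diagGaussian hκ k (g := fun _ => 1)
    (by simpa using summable_exp_neg_mul_int_sq (hκ k))).tsum_eq
  have hmoment := (hasSum_apply_mul_diagGaussian hκ k (g := fun x => (x : ℝ) ^ 2)
    (summable_int_sq_mul_exp_neg_mul_sq (hκ k))).tsum_eq
  simp only [one_mul] at hmass
  rw [SecondMomentBound, hmass, hmoment, ← mul_assoc]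
  exact mul_le_mul_of_nonneg_right (secondMomentBound_int_gaussian (hκ k))
    (tsum_nonneg fun Y => (diagGaussian_pos _ Y).le)

lemma summable_apply_mul_apply_mul_diagGaussian (hκ : ∀ k, 0 < κ k) (j k : K) :
    Summable fun X : K → ℤ => (X j : ℝ) * X k * diagGaussian κ X := by
  refine ((summable_sq_apply_mul_diagGaussian hκ j).add
    (summable_sq_apply_mul_diagGaussian hκ k)).of_norm_bounded fun X => ?_
  rw [norm_mul, Real.norm_of_nonneg (diagGaussian_pos κ X).le, ← add_mul]
  refine mul_le_mul_of_nonneg_right ?_ (diagGaussian_pos κ X).le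
  rw [Real.norm_eq_abs, abs_le]
  constructor <;> nlinarith [sq_nonneg ((X j : ℝ) - X k), sq_nonneg ((X j : ℝ) + X k)]

lemma tsum_apply_mul_apply_mul_diagGaussian (κ : K → ℝ) {j k : K} (hjk : j ≠ k) :
    ∑' X : K → ℤ, (X j : ℝ) * X k * diagGaussian κ X = 0 := by
  classical
  let flip : (K → ℤ) ≃ (K → ℤ) :=
    Equiv.piCongrRight fun i => if i = j then Equiv.neg ℤ else Equiv.refl ℤ
  have hsq (X : K → ℤ) (i : K) : (flip X i : ℝ) ^ 2 = (X i : ℝ) ^ 2 := by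
    by_cases hi : i = j <;> simp [flip, hi]
  have hodd (X : K → ℤ) : (flip X j : ℝ) * flip X k * diagGaussian κ (flip X)
      = -((X j : ℝ) * X k * diagGaussian κ X) := by
    have hj : flip X j = -X j := by simp [flip]
    have hk : flip X k = X k := by simp [flip, hjk.symm]
    simp only [diagGaussian, hsq, hj, hk]
    push_cast
    ring
  have h := flip.tsum_eq fun X : K → ℤ => (X j : ℝ) * X k * diagGaussian κ X
  simp_rw [hodd, tsum_neg] at h
  linarith

lemma sq_sum_mul_diagGaussian (κ : K → ℝ) (X : K → ℤ) :
    (∑ k, (X k : ℝ)) ^ 2 * diagGaussian κ X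
      = ∑ j, ∑ k, (X j : ℝ) * X k * diagGaussian κ X := by
  simp_rw [sq, Finset.sum_mul_sum, Finset.sum_mul]

lemma summable_sq_sum_mul_diagGaussian (hκ : ∀ k, 0 < κ k) :
    Summable fun X : K → ℤ => (∑ k, (X k : ℝ)) ^ 2 * diagGaussian κ X := by
  simp_rw [sq_sum_mul_diagGaussian]
  exact summable_sum fun j _ => summable_sum fun k _ =>
    summable_apply_mul_apply_mul_diagGaussian hκ j k

lemma secondMomentBound_sum_diagGaussian (hκ : ∀ k, 0 < κ k) :
    SecondMomentBound (fun X : K → ℤ => ∑ k, (X k : ℝ)) (diagGaussian κ)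
      (2 / 3 * ∑ k, Real.exp (-κ k)) := by
  have hpair := summable_apply_mul_apply_mul_diagGaussian hκ
  have hmoment : ∑' X : K → ℤ, (∑ k, (X k : ℝ)) ^ 2 * diagGaussian κ X
      = ∑ k, ∑' X : K → ℤ, (X k : ℝ) ^ 2 * diagGaussian κ X := by
    simp_rw [sq_sum_mul_diagGaussian]
    rw [Summable.tsum_finsetSum fun j _ => summable_sum fun k _ => hpair j k]
    refine Finset.sum_congr rfl fun j _ => ?_
    rw [Summable.tsum_finsetSum fun k _ => hpair j k, Finset.sum_eq_single j]
    · simp_rw [sq]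
    · exact fun k _ hk => tsum_apply_mul_apply_mul_diagGaussian κ hk.symm
    · simp
  rw [SecondMomentBound, hmoment, Finset.mul_sum, Finset.sum_mul]
  exact Finset.sum_le_sum fun k _ => secondMomentBound_apply_diagGaussian hκ k

end IntegerGaussian

section DiagonalMajorant

variable {G K J : Type*} [AddCommGroup G]

/-- Coefficients of the diagonal form `∑ k, csCoeff e k * X k ^ 2` which dominates
`(∑ k ∈ e, X k) ^ 2` by the Cauchy–Schwarz inequality. -/
def csCoeff [DecidableEq K] (e : Finset K) (k : K) : ℝ :=
  if k ∈ e then (e.card : ℝ) else 0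

lemma csCoeff_nonneg [DecidableEq K] (e : Finset K) (k : K) : 0 ≤ csCoeff e k := by
  unfold csCoeff; positivity

lemma card_mul_sum_sq_sub_sq_sum (e : Finset K) (X : K → ℝ) :
    (e.card : ℝ) * ∑ k ∈ e, X k ^ 2 - (∑ k ∈ e, X k) ^ 2
      = ∑ p ∈ e ×ˢ e, 1 / 2 * (X p.1 - X p.2) ^ 2 := by
  have hexpand (i j : K) :
      1 / 2 * (X i - X j) ^ 2 = 1 / 2 * X i ^ 2 + 1 / 2 * X j ^ 2 - X i * X j := by ring
  simp_rw [Finset.sum_product, hexpand, Finset.sum_sub_distrib, Finset.sum_add_distrib,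
    Finset.sum_const, ← Finset.mul_sum, ← Finset.sum_mul, nsmul_eq_mul, ← Finset.mul_sum]
  ring

variable [Fintype K]

lemma sum_csCoeff_mul_sq [DecidableEq K] (e : Finset K) (X : K → ℝ) :
    ∑ k, csCoeff e k * X k ^ 2 = (e.card : ℝ) * ∑ k ∈ e, X k ^ 2 := by
  simp [csCoeff, Finset.mul_sum, ite_mul]

lemma isPosDefFun_exp_neg_csDefect [DecidableEq K] (e : Finset K) {s : ℝ} (hs : 0 ≤ s) :
    IsPosDefFun fun X : K → ℤ =>
      Real.exp (-(s * (∑ k, csCoeff e k * (X k : ℝ) ^ 2 - (∑ k ∈ e, (X k : ℝ)) ^ 2))) := by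
  have hfactor (X : K → ℤ) :
      Real.exp (-(s * (∑ k, csCoeff e k * (X k : ℝ) ^ 2 - (∑ k ∈ e, (X k : ℝ)) ^ 2)))
        = ∏ p ∈ e ×ˢ e, Real.exp (-(s / 2 * ((X p.1 : ℝ) - X p.2) ^ 2)) := by
    rw [sum_csCoeff_mul_sq, card_mul_sum_sq_sub_sq_sum, ← Real.exp_sum, Finset.sum_neg_distrib,
      Finset.mul_sum]
    simp_rw [← mul_assoc, mul_one_div]
  simp_rw [hfactor]
  refine IsPosDefFun.prod _ fun p _ => ?_
  simpa using (isPosDefFun_exp_neg_mul_sq (t := s / 2) (by positivity)).comp_addMonoidHom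
    ((Int.castAddHom ℝ).comp
      (Pi.evalAddMonoidHom (fun _ : K => ℤ) p.1 - Pi.evalAddMonoidHom (fun _ : K => ℤ) p.2))

/-- Along `l` the linear form `x` becomes, up to sign, the sum of the coordinates in `e`. -/
def RestrictsToSum (l : (K → ℤ) →+ G) (x : G →+ ℝ) (e : Finset K) : Prop :=
  ∀ X, x (l X) ^ 2 = (∑ k ∈ e, (X k : ℝ)) ^ 2

/-- The quadratic form `Q` is dominated along `l` by the diagonal form with coefficients `κ`, in
the strong sense that the exponential of minus their difference is positive definite. -/
structure DiagonalMajorant (l : (K → ℤ) →+ G) (Q : G → ℝ) (κ : K → ℝ) : Prop where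
  parallelogram : ∀ a b, Q (a + b) + Q (a - b) = 2 * Q a + 2 * Q b
  isPosDefFun : IsPosDefFun fun X => Real.exp (Q (l X)) * diagGaussian κ X

namespace DiagonalMajorant

variable {l : (K → ℤ) →+ G} {Q : G → ℝ} {κ : K → ℝ}

lemma zero (l : (K → ℤ) →+ G) : DiagonalMajorant l (fun _ => 0) fun _ => 0 where
  parallelogram _ _ := by simp
  isPosDefFun := by simpa [diagGaussian] using IsPosDefFun.const_one

lemma add_sq [DecidableEq K] (h : DiagonalMajorant l Q κ) {x : G →+ ℝ} {e : Finset K}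
    (hx : RestrictsToSum l x e) {s : ℝ} (hs : 0 ≤ s) :
    DiagonalMajorant l (fun a => Q a + s * x a ^ 2) fun k => κ k + s * csCoeff e k where
  parallelogram a b := by
    simp only [map_add, map_sub]
    linear_combination h.parallelogram a b
  isPosDefFun := by
    convert h.isPosDefFun.mul (isPosDefFun_exp_neg_csDefect e hs) using 2 with X
    simp_rw [diagGaussian, ← Real.exp_add, hx X, add_mul, Finset.sum_add_distrib, mul_assoc,
      ← Finset.mul_sum]
    congr 1
    ring

lemma sum_sq [DecidableEq K] {x : J → G →+ ℝ} {e : J → Finset K}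
    (hx : ∀ j, RestrictsToSum l (x j) (e j)) {s : J → ℝ} (hs : ∀ j, 0 ≤ s j) (A : Finset J) :
    DiagonalMajorant l (fun a => ∑ j ∈ A, s j * x j a ^ 2)
      fun k => ∑ j ∈ A, s j * csCoeff (e j) k := by
  classical
  induction A using Finset.induction_on with
  | empty => simpa using zero l
  | insert j A hj ih =>
    simp_rw [Finset.sum_insert hj, add_comm (s j * _)]
    exact ih.add_sq (hx j) (hs j)

variable [IsAddTorsionFree G] {f : G →+ ℝ}

theorem secondMomentBound (h : DiagonalMajorant l Q κ) (hl : Function.Injective l)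
    (hf : ∀ X, f (l X) = ∑ k, (X k : ℝ)) (hκ : ∀ k, 0 < κ k)
    (hs : Summable fun a => (1 + f a ^ 2) * Real.exp (-Q a)) :
    SecondMomentBound f (fun a => Real.exp (-Q a)) (2 / 3 * ∑ k, Real.exp (-κ k)) := by
  have hcancel (X : K → ℤ) :
      Real.exp (-Q (l X)) * (Real.exp (Q (l X)) * diagGaussian κ X) = diagGaussian κ X := by
    rw [← mul_assoc, ← Real.exp_add, neg_add_cancel, Real.exp_zero, one_mul]
  have hginibre := ginibre_secondMoment_le hl f h.parallelogram h.isPosDefFun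
    (summable_of_one_add_sq_mul (fun _ => Real.exp_nonneg _) hs)
    (summable_sq_mul_of_one_add_sq_mul (fun _ => Real.exp_nonneg _) hs)
    (by simpa only [hcancel] using summable_diagGaussian hκ)
    (by simpa only [hcancel, hf] using summable_sq_sum_mul_diagGaussian hκ)
  simp only [hcancel, hf] at hginibre
  have hmass : 0 < ∑' X, diagGaussian κ X :=
    (summable_diagGaussian hκ).tsum_pos (fun X => (diagGaussian_pos κ X).le) 0
      (diagGaussian_pos κ 0)
  refine le_of_mul_le_mul_right ?_ hmass
  calc 2 / 3 * (∑ k, Real.exp (-κ k)) * (∑' a, Real.exp (-Q a)) * ∑' X, diagGaussian κ X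
      = (∑' a, Real.exp (-Q a)) * (2 / 3 * (∑ k, Real.exp (-κ k)) * ∑' X, diagGaussian κ X) := by
        ring
    _ ≤ (∑' a, Real.exp (-Q a)) * ∑' X : K → ℤ, (∑ k, (X k : ℝ)) ^ 2 * diagGaussian κ X :=
        mul_le_mul_of_nonneg_left (secondMomentBound_sum_diagGaussian hκ)
          (tsum_nonneg fun _ => Real.exp_nonneg _)
    _ ≤ _ := hginibre

end DiagonalMajorant

/-- Laplace transform at `t` of the random variable equal to `s` with probability `p` and to `0`
otherwise. -/
noncomputable def bernoulliLaplace (p s t : ℝ) : ℝ :=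
  1 - p + p * Real.exp (-(s * t))

lemma bernoulliLaplace_nonneg {p : ℝ} (hp₀ : 0 ≤ p) (hp₁ : p ≤ 1) (s t : ℝ) :
    0 ≤ bernoulliLaplace p s t :=
  add_nonneg (sub_nonneg.2 hp₁) (mul_nonneg hp₀ (Real.exp_nonneg _))

lemma bernoulliLaplace_le_one {p s t : ℝ} (hp₀ : 0 ≤ p) (hs : 0 ≤ s) (ht : 0 ≤ t) :
    bernoulliLaplace p s t ≤ 1 := by
  have hexp : Real.exp (-(s * t)) ≤ 1 := Real.exp_le_one_iff.2 (neg_nonpos.2 (mul_nonneg hs ht))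
  unfold bernoulliLaplace
  nlinarith

lemma exp_neg_mul_prod_insert_bernoulliLaplace {A : Finset J} [DecidableEq J] {j : J} (hj : j ∉ A)
    (u : ℝ) (p s t : J → ℝ) :
    Real.exp (-u) * ∏ i ∈ insert j A, bernoulliLaplace (p i) (s i) (t i)
      = (1 - p j) * (Real.exp (-u) * ∏ i ∈ A, bernoulliLaplace (p i) (s i) (t i))
        + p j * (Real.exp (-(u + s j * t j)) *
          ∏ i ∈ A, bernoulliLaplace (p i) (s i) (t i)) := by
  rw [Finset.prod_insert hj, bernoulliLaplace, neg_add, Real.exp_add]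
  ring

/-- Conditionally on the Bernoulli variables the weight is Gaussian; they are put in one at a
time. -/
theorem DiagonalMajorant.secondMomentBound_mixture [IsAddTorsionFree G] [DecidableEq K]
    {l : (K → ℤ) →+ G} (hl : Function.Injective l) {f : G →+ ℝ} (hf : ∀ X, f (l X) = ∑ k, (X k : ℝ))
    {x : J → G →+ ℝ} {e : J → Finset K} (hx : ∀ j, RestrictsToSum l (x j) (e j)) {p s : J → ℝ}
    (hp₀ : ∀ j, 0 ≤ p j) (hp₁ : ∀ j, p j ≤ 1) (hs : ∀ j, 0 ≤ s j) (A : Finset J) :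
    ∀ {Q : G → ℝ} {κ : K → ℝ}, DiagonalMajorant l Q κ → (∀ k, 0 < κ k) →
      (Summable fun a => (1 + f a ^ 2) * Real.exp (-Q a)) →
      SecondMomentBound f
        (fun a => Real.exp (-Q a) * ∏ j ∈ A, bernoulliLaplace (p j) (s j) (x j a ^ 2))
        (2 / 3 * ∑ k, Real.exp (-κ k) *
          ∏ j ∈ A, bernoulliLaplace (p j) (s j) (csCoeff (e j) k)) := by
  classical
  induction A using Finset.induction_on with
  | empty =>
    intro Q κ h hκ hQ
    simpa using h.secondMomentBound hl hf hκ hQ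
  | insert j A hj ih =>
    intro Q κ h hκ hQ
    have hprod₀ (t : J → ℝ) : 0 ≤ ∏ i ∈ A, bernoulliLaplace (p i) (s i) (t i) :=
      Finset.prod_nonneg fun i _ => bernoulliLaplace_nonneg (hp₀ i) (hp₁ i) _ _
    have hprod₁ (a : G) : ∏ i ∈ A, bernoulliLaplace (p i) (s i) (x i a ^ 2) ≤ 1 :=
      Finset.prod_le_one (fun i _ => bernoulliLaplace_nonneg (hp₀ i) (hp₁ i) _ _)
        fun i _ => bernoulliLaplace_le_one (hp₀ i) (hs i) (sq_nonneg _)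
    have hQle (a : G) : Q a ≤ Q a + s j * x j a ^ 2 :=
      le_add_of_nonneg_right (mul_nonneg (hs j) (sq_nonneg _))
    have hκle (k : K) : κ k ≤ κ k + s j * csCoeff (e j) k :=
      le_add_of_nonneg_right (mul_nonneg (hs j) (csCoeff_nonneg _ _))
    have hQ' := summable_one_add_sq_mul_of_le (fun a => Real.exp_nonneg _)
      (fun a => Real.exp_le_exp.2 (neg_le_neg (hQle a))) hQ
    have hmix := (ih h hκ hQ).mixture
      (ih (h.add_sq (hx j) (hs j)) (fun k => (hκ k).trans_le (hκle k)) hQ') (hp₀ j) (hp₁ j)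
      (fun a => mul_nonneg (Real.exp_nonneg _) (hprod₀ _))
      (fun a => mul_le_mul_of_nonneg_right (Real.exp_le_exp.2 (neg_le_neg (hQle a))) (hprod₀ _))
      (mul_le_mul_of_nonneg_left (Finset.sum_le_sum fun k _ => mul_le_mul_of_nonneg_right
        (Real.exp_le_exp.2 (neg_le_neg (hκle k))) (hprod₀ _)) (by norm_num))
      (summable_one_add_sq_mul_of_le (fun a => mul_nonneg (Real.exp_nonneg _) (hprod₀ _))
        (fun a => mul_le_of_le_one_right (Real.exp_nonneg _) (hprod₁ a)) hQ)
    simp_rw [exp_neg_mul_prod_insert_bernoulliLaplace hj, Finset.sum_add_distrib, mul_add,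
      ← Finset.mul_sum, mul_left_comm (2 / 3 : ℝ)]
    exact hmix

end DiagonalMajorant

section StableLaplace

lemma sum_le_intervalIntegral_of_antitoneOn_Ioi {g : ℝ → ℝ} (hg : AntitoneOn g (Set.Ioi 0))
    (hi : IntegrableOn g (Set.Ioi 0)) (m : ℕ) :
    ∑ j ∈ Finset.range m, g (j + 1) ≤ ∫ u in (0 : ℝ)..m, g u := by
  have hinteg (j : ℕ) : IntervalIntegrable g volume j (j + 1 : ℕ) := by
    refine (intervalIntegrable_iff_integrableOn_Ioc_of_le (by simp)).2 (hi.mono_set fun u hu => ?_)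
    exact (Nat.cast_nonneg j).trans_lt hu.1
  have hsum := intervalIntegral.sum_integral_adjacent_intervals (n := m) fun j _ => hinteg j
  rw [Nat.cast_zero] at hsum
  rw [← hsum]
  refine Finset.sum_le_sum fun j _ => ?_
  have hmono := intervalIntegral.integral_mono_on_of_le_Ioo (by simp)
    (intervalIntegrable_const (c := g (j + 1))) (hinteg j) fun u hu =>
      hg ((Nat.cast_nonneg j).trans_lt hu.1) (Set.mem_Ioi.2 (by positivity))
        (by simpa using hu.2.le)
  simpa using hmono

lemma intervalIntegral_le_sum_of_antitoneOn_Ioi {g : ℝ → ℝ} (hg : AntitoneOn g (Set.Ioi 0))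
    (m : ℕ) : ∫ u in (1 : ℝ)..m + 1, g u ≤ ∑ j ∈ Finset.range m, g (j + 1) := by
  have h := (hg.mono fun u hu => zero_lt_one.trans_le hu.1 :
    AntitoneOn g (Set.Icc (1 : ℝ) (1 + m))).integral_le_sum
  simpa only [add_comm] using h

lemma tendsto_intervalIntegral_integral_Ioi {ι : Type*} {L : Filter ι} [L.IsCountablyGenerated]
    {g : ℝ → ℝ} {a b : ι → ℝ} {A : ℝ} (hi : IntegrableOn g (Set.Ioi A)) (hA : ∀ i, A ≤ a i)
    (hab : ∀ i, a i ≤ b i) (ha : Tendsto a L (𝓝 A)) (hb : Tendsto b L atTop) :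
    Tendsto (fun i => ∫ u in a i..b i, g u) L (𝓝 (∫ u in Set.Ioi A, g u)) := by
  refine (((aecover_Ioi_of_Ioi (μ := volume) ha).inter
    (aecover_Iic hb)).integral_tendsto_of_countably_generated hi).congr fun i => ?_
  have hsub : Set.Ioi (a i) ∩ Set.Iic (b i) ⊆ Set.Ioi A := fun u hu => (hA i).trans_lt hu.1
  rw [Measure.restrict_restrict_of_subset hsub, intervalIntegral.integral_of_le (hab i)]
  rfl

lemma intervalIntegral_one_div_mul_comp_div (g : ℝ → ℝ) {c : ℝ} (hc : c ≠ 0) (a b : ℝ) :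
    ∫ u in a..b, 1 / c * g (u / c) = ∫ u in a / c..b / c, g u := by
  rw [intervalIntegral.integral_const_mul, intervalIntegral.integral_comp_div _ hc, smul_eq_mul,
    ← mul_assoc, one_div_mul_cancel hc, one_mul]

lemma tendsto_riemannSum_integral_Ioi {g : ℝ → ℝ} (hg : AntitoneOn g (Set.Ioi 0))
    (hg₀ : ∀ u, 0 < u → 0 ≤ g u) (hi : IntegrableOn g (Set.Ioi 0)) :
    Tendsto (fun n : ℕ => ∑ j ∈ Finset.range (n ^ 2), 1 / (n : ℝ) * g ((j + 1) / n)) atTop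
      (𝓝 (∫ u in Set.Ioi 0, g u)) := by
  have hscale {n : ℕ} (hn : 0 < n) : AntitoneOn (fun u => 1 / (n : ℝ) * g (u / n)) (Set.Ioi 0) :=
    fun u hu v hv huv => mul_le_mul_of_nonneg_left
      (hg (Set.mem_Ioi.2 (div_pos hu (by positivity))) (Set.mem_Ioi.2 (div_pos hv (by positivity)))
        (by gcongr)) (by positivity)
  have hlower : Tendsto (fun n : ℕ => ∫ u in (1 / n : ℝ)..((n ^ 2 : ℕ) + 1) / n, g u) atTop
      (𝓝 (∫ u in Set.Ioi 0, g u)) := by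
    refine tendsto_intervalIntegral_integral_Ioi hi (fun n => by positivity)
      (fun n => by gcongr; simp) tendsto_one_div_atTop_nhds_zero_nat ?_
    refine tendsto_atTop_mono (fun n => ?_) tendsto_natCast_atTop_atTop
    rcases n.eq_zero_or_pos with rfl | hn
    · simp
    · rw [le_div_iff₀ (by positivity)]
      push_cast
      nlinarith
  refine tendsto_of_tendsto_of_tendsto_of_le_of_le' hlower tendsto_const_nhds ?_ ?_
  · filter_upwards [eventually_gt_atTop 0] with n hn
    have hn' : (n : ℝ) ≠ 0 := by positivity
    simpa only [intervalIntegral_one_div_mul_comp_div g hn'] using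
      intervalIntegral_le_sum_of_antitoneOn_Ioi (hscale hn) (n ^ 2)
  · filter_upwards [eventually_gt_atTop 0] with n hn
    have hn' : (0 : ℝ) < n := by positivity
    have hinteg : IntegrableOn (fun u => 1 / (n : ℝ) * g (u / n)) (Set.Ioi 0) := by
      simpa [IntegrableOn, div_eq_inv_mul] using
        ((integrableOn_Ioi_comp_mul_left_iff g 0 (inv_pos.2 hn')).2 (by simpa using hi)).const_mul
          (1 / (n : ℝ))
    have h := sum_le_intervalIntegral_of_antitoneOn_Ioi (hscale hn) hinteg (n ^ 2)
    rw [intervalIntegral_one_div_mul_comp_div g hn'.ne', zero_div,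
      intervalIntegral.integral_of_le (by positivity)] at h
    exact h.trans (setIntegral_mono_set hi
      ((ae_restrict_iff' measurableSet_Ioi).2 (.of_forall hg₀))
      Set.Ioc_subset_Ioi_self.eventuallyLE)

lemma exp_neg_div_one_sub_le_one_sub {x t : ℝ} (hx : 0 ≤ x) (hxt : x ≤ t) (ht : t < 1) :
    Real.exp (-(x / (1 - t))) ≤ 1 - x := by
  have hx1 : 0 < 1 - x := by linarith
  rw [Real.exp_neg]
  refine inv_le_of_inv_le₀ hx1 ?_
  calc (1 - x)⁻¹ = x / (1 - x) + 1 := by field_simp; ring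
    _ ≤ x / (1 - t) + 1 := by gcongr
    _ ≤ _ := Real.add_one_le_exp _

lemma tendsto_prod_one_sub {ι J : Type*} {L : Filter ι} {A : ι → Finset J} {x : ι → J → ℝ}
    {t : ι → ℝ} {S : ℝ} (hx : ∀ i j, 0 ≤ x i j) (hxt : ∀ i j, x i j ≤ t i)
    (ht : Tendsto t L (𝓝 0)) (hS : Tendsto (fun i => ∑ j ∈ A i, x i j) L (𝓝 S)) :
    Tendsto (fun i => ∏ j ∈ A i, (1 - x i j)) L (𝓝 (Real.exp (-S))) := by
  have hlower : Tendsto (fun i => Real.exp (-((∑ j ∈ A i, x i j) / (1 - t i)))) L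
      (𝓝 (Real.exp (-S))) := by
    simpa using (hS.div (ht.const_sub 1) (by simp)).neg.rexp
  refine tendsto_of_tendsto_of_tendsto_of_le_of_le' hlower hS.neg.rexp ?_ ?_ <;>
    filter_upwards [ht.eventually_lt_const one_pos] with i hi
  · rw [Finset.sum_div, ← Finset.sum_neg_distrib, Real.exp_sum]
    exact Finset.prod_le_prod (fun j _ => Real.exp_nonneg _) fun j _ =>
      exp_neg_div_one_sub_le_one_sub (hx i j) (hxt i j) hi
  · rw [← Finset.sum_neg_distrib, Real.exp_sum]
    exact Finset.prod_le_prod (fun j _ => by linarith [hxt i j]) fun j _ =>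
      Real.one_sub_le_exp_neg _

/-- Integrand in the Laplace exponent `∫ u in Ioi 0, stableIntegrand r y u` at `y` of a stable
subordinator of index `1 / r`, whose jumps are the points `u ^ (-r)` with `u` Poisson. -/
noncomputable def stableIntegrand (r y u : ℝ) : ℝ :=
  1 - Real.exp (-(y * u ^ (-r)))

lemma stableIntegrand_nonneg (r : ℝ) {y u : ℝ} (hy : 0 ≤ y) (hu : 0 ≤ u) :
    0 ≤ stableIntegrand r y u :=
  sub_nonneg.2 (Real.exp_le_one_iff.2 (neg_nonpos.2 (mul_nonneg hy (Real.rpow_nonneg hu _))))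

lemma stableIntegrand_le_one (r y u : ℝ) : stableIntegrand r y u ≤ 1 :=
  sub_le_self _ (Real.exp_nonneg _)

lemma stableIntegrand_le_mul_rpow (r y u : ℝ) : stableIntegrand r y u ≤ y * u ^ (-r) := by
  unfold stableIntegrand
  linarith [Real.add_one_le_exp (-(y * u ^ (-r)))]

lemma antitoneOn_stableIntegrand {r y : ℝ} (hr : 0 ≤ r) (hy : 0 ≤ y) :
    AntitoneOn (stableIntegrand r y) (Set.Ioi 0) := by
  intro u hu v _ huv
  have hrpow : v ^ (-r) ≤ u ^ (-r) := Real.rpow_le_rpow_of_nonpos hu huv (by linarith)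
  unfold stableIntegrand
  gcongr

lemma integrableOn_stableIntegrand {r y : ℝ} (hr : 1 < r) (hy : 0 ≤ y) :
    IntegrableOn (stableIntegrand r y) (Set.Ioi 0) := by
  have hmeas : Measurable (stableIntegrand r y) := by unfold stableIntegrand; fun_prop
  have hnorm {u : ℝ} (hu : 0 < u) : ‖stableIntegrand r y u‖ = stableIntegrand r y u :=
    Real.norm_of_nonneg (stableIntegrand_nonneg r hy hu.le)
  rw [← Set.Ioc_union_Ioi_eq_Ioi (zero_le_one (α := ℝ)), integrableOn_union]
  constructor
  · refine Measure.integrableOn_of_bounded (M := 1) (by simp) hmeas.aestronglyMeasurable ?_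
    filter_upwards [ae_restrict_mem measurableSet_Ioc] with u hu
    exact (hnorm hu.1).trans_le (stableIntegrand_le_one r y u)
  · refine ((integrableOn_Ioi_rpow_of_lt (a := -r) (by linarith) one_pos).const_mul y).mono'
      hmeas.aestronglyMeasurable ?_
    filter_upwards [ae_restrict_mem measurableSet_Ioi] with u hu
    exact (hnorm (one_pos.trans hu)).trans_le (stableIntegrand_le_mul_rpow r y u)

lemma integral_stableIntegrand {r y : ℝ} (hr : 0 < r) (hy : 0 ≤ y) :
    ∫ u in Set.Ioi 0, stableIntegrand r y u
      = y ^ r⁻¹ * ∫ u in Set.Ioi 0, stableIntegrand r 1 u := by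
  rcases hy.eq_or_lt with rfl | hy
  · simp [stableIntegrand, Real.zero_rpow (inv_pos.2 hr).ne']
  have hpos : 0 < y ^ r⁻¹ := by positivity
  have hscale : ∫ u in Set.Ioi 0, stableIntegrand r 1 u
      = ∫ u in Set.Ioi 0, stableIntegrand r y (y ^ r⁻¹ * u) := by
    refine setIntegral_congr_fun measurableSet_Ioi fun u hu => ?_
    rw [stableIntegrand, stableIntegrand, Real.mul_rpow hpos.le (le_of_lt hu),
      ← Real.rpow_mul hy.le, mul_neg, inv_mul_cancel₀ hr.ne', Real.rpow_neg_one, ← mul_assoc,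
      mul_inv_cancel₀ hy.ne']
  rw [hscale, integral_comp_mul_left_Ioi _ 0 hpos, mul_zero, smul_eq_mul,
    mul_inv_cancel_left₀ hpos.ne']

lemma integral_stableIntegrand_pos {r : ℝ} (hr : 1 < r) :
    0 < ∫ u in Set.Ioi 0, stableIntegrand r 1 u := by
  rw [setIntegral_pos_iff_support_of_nonneg_ae _ (integrableOn_stableIntegrand hr zero_le_one)]
  · have hsupport : Set.Ioi 0 ⊆ Function.support (stableIntegrand r 1) := fun u hu => by
      have hexp : Real.exp (-(1 * u ^ (-r))) < 1 :=
        Real.exp_lt_one_iff.2 (by simpa using Real.rpow_pos_of_pos hu _)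
      exact (sub_pos.2 hexp).ne'
    rw [Set.inter_eq_right.2 hsupport]
    simp
  · filter_upwards [ae_restrict_mem measurableSet_Ioi] with u hu
    exact stableIntegrand_nonneg r zero_le_one (le_of_lt hu)

/-- The stable law is the limit of sums of independent two-valued variables which discretise its
Poisson process of jumps. -/
theorem exists_tendsto_prod_bernoulliLaplace {θ c : ℝ} (hθ₀ : 0 < θ) (hθ₁ : θ < 1) (hc : 0 ≤ c) :
    ∃ s : ℕ → ℕ → ℝ, (∀ n j, 0 ≤ s n j) ∧ ∀ t, 0 ≤ t →
      Tendsto (fun n : ℕ => ∏ j ∈ Finset.range (n ^ 2), bernoulliLaplace (1 / n) (s n j) t) atTop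
        (𝓝 (Real.exp (-(c * t ^ θ)))) := by
  have hr : 1 < θ⁻¹ := (one_lt_inv₀ hθ₀).2 hθ₁
  set I := ∫ u in Set.Ioi 0, stableIntegrand θ⁻¹ 1 u with hI
  have hIpos : 0 < I := integral_stableIntegrand_pos hr
  refine ⟨fun n j => (c / I) ^ θ⁻¹ * ((j + 1) / n) ^ (-θ⁻¹), fun n j => by positivity,
    fun t ht => ?_⟩
  have hy : 0 ≤ (c / I) ^ θ⁻¹ * t := by positivity
  have hriemann := tendsto_riemannSum_integral_Ioi (antitoneOn_stableIntegrand (by linarith) hy)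
    (fun u hu => stableIntegrand_nonneg _ hy hu.le) (integrableOn_stableIntegrand hr hy)
  have hvalue : ∫ u in Set.Ioi 0, stableIntegrand θ⁻¹ ((c / I) ^ θ⁻¹ * t) u = c * t ^ θ := by
    rw [integral_stableIntegrand (by linarith) hy, ← hI, inv_inv,
      Real.mul_rpow (by positivity) ht, ← Real.rpow_mul (by positivity), inv_mul_cancel₀ hθ₀.ne',
      Real.rpow_one]
    field_simp
  rw [hvalue] at hriemann
  have hprod := tendsto_prod_one_sub (A := fun n : ℕ => Finset.range (n ^ 2))
    (x := fun n j => 1 / n * stableIntegrand θ⁻¹ ((c / I) ^ θ⁻¹ * t) ((j + 1) / n))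
    (t := fun n => 1 / n)
    (fun n j => mul_nonneg (by positivity) (stableIntegrand_nonneg _ hy (by positivity)))
    (fun n j => mul_le_of_le_one_right (by positivity) (stableIntegrand_le_one _ _ _))
    tendsto_one_div_atTop_nhds_zero_nat hriemann
  refine hprod.congr fun n => Finset.prod_congr rfl fun j _ => ?_
  rw [stableIntegrand, bernoulliLaplace, mul_right_comm]
  ring

end StableLaplace

section StableMixture

variable {G K J : Type*} [AddCommGroup G] [IsAddTorsionFree G] [Fintype K] [DecidableEq K]
  {l : (K → ℤ) →+ G} {f : G →+ ℝ} {Q : G → ℝ} {κ : K → ℝ} {x : J → G →+ ℝ} {e : J → Finset K}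
  {θ : ℝ} {c : J → ℝ}

lemma one_div_natCast_le_one (n : ℕ) : 1 / (n : ℝ) ≤ 1 := by
  simpa using Nat.cast_inv_le_one n

theorem DiagonalMajorant.secondMomentBound_stable (hl : Function.Injective l)
    (hf : ∀ X, f (l X) = ∑ k, (X k : ℝ)) (hx : ∀ j, RestrictsToSum l (x j) (e j))
    (hθ₀ : 0 < θ) (hθ₁ : θ < 1) (hc : ∀ j, 0 ≤ c j) (h : DiagonalMajorant l Q κ)
    (hκ : ∀ k, 0 < κ k) (hQ : Summable fun a => (1 + f a ^ 2) * Real.exp (-Q a))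
    (A : Finset J) :
    SecondMomentBound f (fun a => Real.exp (-(Q a + ∑ j ∈ A, c j * (x j a ^ 2) ^ θ)))
      (2 / 3 * ∑ k, Real.exp (-(κ k + ∑ j ∈ A, c j * csCoeff (e j) k ^ θ))) := by
  choose s hs hlim using fun j => exists_tendsto_prod_bernoulliLaplace hθ₀ hθ₁ (hc j)
  have hlim' (u : ℝ) (t : J → ℝ) (ht : ∀ j, 0 ≤ t j) :
      Tendsto (fun n : ℕ => Real.exp (-u) * ∏ i ∈ A ×ˢ Finset.range (n ^ 2),
        bernoulliLaplace (1 / n) (s i.1 n i.2) (t i.1)) atTop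
        (𝓝 (Real.exp (-(u + ∑ j ∈ A, c j * t j ^ θ)))) := by
    simp_rw [neg_add, Real.exp_add, ← Finset.sum_neg_distrib, Real.exp_sum, Finset.prod_product]
    exact (tendsto_finsetProd A fun j _ => hlim j (t j) (ht j)).const_mul _
  have hp₀ (n : ℕ) : 0 ≤ 1 / (n : ℝ) := by positivity
  have hnonneg (n : ℕ) (i : J × ℕ) (t : ℝ) : 0 ≤ bernoulliLaplace (1 / n) (s i.1 n i.2) t :=
    bernoulliLaplace_nonneg (hp₀ n) (one_div_natCast_le_one n) _ _
  have hmix (n : ℕ) := DiagonalMajorant.secondMomentBound_mixture (x := fun i : J × ℕ => x i.1)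
    (e := fun i => e i.1) (p := fun _ => 1 / n) (s := fun i => s i.1 n i.2) hl hf
    (fun i => hx i.1) (fun _ => hp₀ n) (fun _ => one_div_natCast_le_one n) (fun i => hs i.1 n i.2)
    (A ×ˢ Finset.range (n ^ 2)) h hκ hQ
  have hbound (n : ℕ) (a : G) : Real.exp (-Q a) * ∏ i ∈ A ×ˢ Finset.range (n ^ 2),
      bernoulliLaplace (1 / n) (s i.1 n i.2) (x i.1 a ^ 2) ≤ Real.exp (-Q a) :=
    mul_le_of_le_one_right (Real.exp_nonneg _) (Finset.prod_le_one (fun i _ => hnonneg n i _)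
      fun i _ => bernoulliLaplace_le_one (hp₀ n) (hs i.1 n i.2) (sq_nonneg _))
  have hr : Tendsto (fun n : ℕ => 2 / 3 * ∑ k, Real.exp (-κ k) *
      ∏ i ∈ A ×ˢ Finset.range (n ^ 2),
        bernoulliLaplace (1 / n) (s i.1 n i.2) (csCoeff (e i.1) k)) atTop
      (𝓝 (2 / 3 * ∑ k, Real.exp (-(κ k + ∑ j ∈ A, c j * csCoeff (e j) k ^ θ)))) :=
    (tendsto_finsetSum _ fun k _ => hlim' (κ k) (fun j => csCoeff (e j) k)
      fun j => csCoeff_nonneg (e j) k).const_mul _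
  exact SecondMomentBound.of_tendsto hmix hQ
    (fun n a => mul_nonneg (Real.exp_nonneg _) (Finset.prod_nonneg fun i _ => hnonneg n i _))
    hbound (fun a => hlim' (Q a) (fun j => x j a ^ 2) fun j => sq_nonneg (x j a)) hr

/-- The stable weight is reached from `δ * Q` plus the stable energy, for which the Gaussian
comparison applies, by letting `δ` tend to `0`. -/
theorem secondMomentBound_stable_finset (hl : Function.Injective l)
    (hf : ∀ X, f (l X) = ∑ k, (X k : ℝ)) (hx : ∀ j, RestrictsToSum l (x j) (e j))
    (hθ₀ : 0 < θ) (hθ₁ : θ < 1) (hc : ∀ j, 0 ≤ c j)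
    (h : ∀ δ, 0 < δ → DiagonalMajorant l (fun a => δ * Q a) fun k => δ * κ k)
    (hκ : ∀ k, 0 < κ k) (hQ₀ : ∀ a, 0 ≤ Q a)
    (hQ : ∀ δ, 0 < δ → Summable fun a => (1 + f a ^ 2) * Real.exp (-(δ * Q a))) {A : Finset J}
    (hs : Summable fun a => (1 + f a ^ 2) * Real.exp (-∑ j ∈ A, c j * (x j a ^ 2) ^ θ)) :
    SecondMomentBound f (fun a => Real.exp (-∑ j ∈ A, c j * (x j a ^ 2) ^ θ))
      (2 / 3 * ∑ k, Real.exp (-∑ j ∈ A, c j * csCoeff (e j) k ^ θ)) := by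
  have hδ (n : ℕ) : (0 : ℝ) < 1 / (n + 1) := by positivity
  have hlim (u v : ℝ) :
      Tendsto (fun n : ℕ => Real.exp (-(1 / ((n : ℝ) + 1) * u + v))) atTop (𝓝 (Real.exp (-v))) := by
    simpa using ((tendsto_one_div_add_atTop_nhds_zero_nat.mul_const u).add_const v).neg.rexp
  refine SecondMomentBound.of_tendsto
    (fun n : ℕ => (h _ (hδ n)).secondMomentBound_stable hl hf hx hθ₀ hθ₁ hc
      (fun k => mul_pos (hδ n) (hκ k)) (hQ _ (hδ n)) A)
    hs (fun _ _ => Real.exp_nonneg _) (fun n a => ?_) (fun a => hlim _ _)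
    ((tendsto_finsetSum _ fun k _ => hlim _ _).const_mul _)
  exact Real.exp_le_exp.2 (neg_le_neg (le_add_of_nonneg_left (mul_nonneg (hδ n).le (hQ₀ a))))

theorem secondMomentBound_stable_tsum (hl : Function.Injective l)
    (hf : ∀ X, f (l X) = ∑ k, (X k : ℝ)) (hx : ∀ j, RestrictsToSum l (x j) (e j))
    (hθ₀ : 0 < θ) (hθ₁ : θ < 1) (hc : ∀ j, 0 ≤ c j)
    (h : ∀ δ, 0 < δ → DiagonalMajorant l (fun a => δ * Q a) fun k => δ * κ k)
    (hκ : ∀ k, 0 < κ k) (hQ₀ : ∀ a, 0 ≤ Q a)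
    (hQ : ∀ δ, 0 < δ → Summable fun a => (1 + f a ^ 2) * Real.exp (-(δ * Q a))) {A : Finset J}
    (hs : Summable fun a => (1 + f a ^ 2) * Real.exp (-∑ j ∈ A, c j * (x j a ^ 2) ^ θ))
    (hsx : ∀ a, Summable fun j => c j * (x j a ^ 2) ^ θ)
    (hse : ∀ k, Summable fun j => c j * csCoeff (e j) k ^ θ) :
    SecondMomentBound f (fun a => Real.exp (-∑' j, c j * (x j a ^ 2) ^ θ))
      (2 / 3 * ∑ k, Real.exp (-∑' j, c j * csCoeff (e j) k ^ θ)) := by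
  classical
  have hunion : Tendsto (fun B : Finset J => B ∪ A) atTop atTop :=
    tendsto_atTop_mono (fun _ => Finset.subset_union_left) tendsto_id
  have hexp {u : J → ℝ} (hu : Summable u) :
      Tendsto (fun B : Finset J => Real.exp (-∑ j ∈ B ∪ A, u j)) atTop
        (𝓝 (Real.exp (-∑' j, u j))) :=
    (hu.hasSum.comp hunion).neg.rexp
  have hle (B : Finset J) (a : G) : Real.exp (-∑ j ∈ B ∪ A, c j * (x j a ^ 2) ^ θ)
      ≤ Real.exp (-∑ j ∈ A, c j * (x j a ^ 2) ^ θ) :=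
    Real.exp_le_exp.2 (neg_le_neg (Finset.sum_le_sum_of_subset_of_nonneg Finset.subset_union_right
      fun j _ _ => mul_nonneg (hc j) (by positivity)))
  exact SecondMomentBound.of_tendsto
    (fun B => secondMomentBound_stable_finset hl hf hx hθ₀ hθ₁ hc h hκ hQ₀ hQ
      (summable_one_add_sq_mul_of_le (fun _ => Real.exp_nonneg _) (hle B) hs))
    hs (fun _ _ => Real.exp_nonneg _) hle (fun a => hexp (hsx a))
    ((tendsto_finsetSum _ fun k _ => hexp (hse k)).const_mul _)

end StableMixture

section ChainSummability

lemma sq_rpow_half (x q : ℝ) : (x ^ 2) ^ (q / 2) = |x| ^ q := by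
  rw [← sq_abs, ← Real.rpow_natCast_mul (abs_nonneg x), Nat.cast_ofNat,
    mul_div_cancel₀ q two_ne_zero]

lemma abs_sub_rpow_le (a b : ℝ) {q : ℝ} (hq : 0 ≤ q) :
    |a - b| ^ q ≤ 2 ^ q * (|a| ^ q + |b| ^ q) := by
  have hmax : |a - b| ≤ 2 * max |a| |b| := by
    linarith [abs_sub a b, le_max_left |a| |b|, le_max_right |a| |b|]
  have hle : max |a| |b| ^ q ≤ |a| ^ q + |b| ^ q := by
    rcases max_choice |a| |b| with h | h <;> rw [h]
    · exact le_add_of_nonneg_right (by positivity)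
    · exact le_add_of_nonneg_left (by positivity)
  calc |a - b| ^ q ≤ (2 * max |a| |b|) ^ q := Real.rpow_le_rpow (abs_nonneg _) hmax hq
    _ = 2 ^ q * max |a| |b| ^ q := Real.mul_rpow zero_le_two (by positivity)
    _ ≤ 2 ^ q * (|a| ^ q + |b| ^ q) := by gcongr

lemma summable_fst_mul_abs_sub_rpow {u : ℤ → ℝ} (hu₀ : 0 ≤ u) (hu : Summable u) {α : ℝ}
    (hα : 1 < α) : Summable fun p : ℤ × ℤ => u p.1 * |(p.1 : ℝ) - p.2| ^ (-α) := by
  have hprod := hu.mul_of_nonneg (Real.summable_abs_int_rpow hα) hu₀ fun _ => by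
    simp only [Pi.zero_apply]; positivity
  have hshear : Function.Injective fun p : ℤ × ℤ => (p.1, p.1 - p.2) := fun p p' h => by
    grind
  simpa [Function.comp_def] using hprod.comp_injective hshear

lemma summable_snd_mul_abs_sub_rpow {u : ℤ → ℝ} (hu₀ : 0 ≤ u) (hu : Summable u) {α : ℝ}
    (hα : 1 < α) : Summable fun p : ℤ × ℤ => u p.2 * |(p.1 : ℝ) - p.2| ^ (-α) := by
  simpa [Function.comp_def, abs_sub_comm] using
    (summable_fst_mul_abs_sub_rpow hu₀ hu hα).comp_injective Prod.swap_injective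

lemma summable_one_add_sq_mul_exp_neg_sum_rpow {I : Type*} [Fintype I] (i₀ : I) {c p : ℝ}
    (hc : 0 < c) (hp : 0 < p) :
    Summable fun X : I → ℤ =>
      (1 + (X i₀ : ℝ) ^ 2) * Real.exp (-∑ i, c * |(X i : ℝ)| ^ p) := by
  classical
  have hsum := summable_one_add_sq_mul_exp_neg_rpow hc hp
  have hfactor (i : I) : Summable fun x : ℤ =>
      (if i = i₀ then 1 + (x : ℝ) ^ 2 else 1) * Real.exp (-(c * |(x : ℝ)| ^ p)) := by
    split_ifs
    · exact hsum
    · simpa using summable_of_one_add_sq_mul (fun _ => Real.exp_nonneg _) hsum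
  simpa only [Finset.prod_mul_distrib, Finset.prod_ite_eq', Finset.mem_univ, if_true,
    ← Real.exp_sum, Finset.sum_neg_distrib] using (hasSum_prod_pi hfactor).summable

end ChainSummability

section Chain

/-- The group of configurations vanishing outside `{-N, …, N}`; its underlying type unfolds to
`ChainConfig N`. -/
def chainGroup (N : ℕ) : AddSubgroup (ℤ → ℤ) where
  carrier := {φ | ∀ k : ℤ, (N : ℤ) < |k| → φ k = 0}
  zero_mem' _ _ := rfl
  add_mem' hφ hψ k hk := by simp [hφ k hk, hψ k hk]
  neg_mem' hφ k hk := by simp [hφ k hk]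

/-- The height of a configuration at `k`, as a real linear form. -/
def chainHeight (N : ℕ) (k : ℤ) : chainGroup N →+ ℝ :=
  (Int.castAddHom ℝ).comp ((Pi.evalAddMonoidHom (fun _ : ℤ => ℤ) k).comp (chainGroup N).subtype)

/-- The height difference across the pair `p`, as a real linear form. -/
def chainIncrement (N : ℕ) (p : ℤ × ℤ) : chainGroup N →+ ℝ :=
  chainHeight N p.1 - chainHeight N p.2

/-- The coupling between the two sites of `p`; on the diagonal it is `0` because `β / 0 = 0`
(for `α ≠ 0`). -/
noncomputable def chainCoupling (β α : ℝ) (p : ℤ × ℤ) : ℝ :=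
  β / |(p.1 : ℝ) - p.2| ^ α

variable {N : ℕ} {β α q : ℝ}

lemma chainHeight_apply (k : ℤ) (φ : chainGroup N) : chainHeight N k φ = (φ.1 k : ℝ) := rfl

lemma chainIncrement_apply (p : ℤ × ℤ) (φ : chainGroup N) :
    chainIncrement N p φ = (φ.1 p.1 : ℝ) - φ.1 p.2 := rfl

lemma chainCoupling_nonneg (hβ : 0 ≤ β) (p : ℤ × ℤ) : 0 ≤ chainCoupling β α p := by
  unfold chainCoupling; positivity

lemma summable_chainHeight_rpow (hq : 0 < q) (φ : chainGroup N) :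
    Summable fun k => |chainHeight N k φ| ^ q := by
  refine summable_of_ne_finset_zero (s := Finset.Icc (-(N : ℤ)) N) fun k hk => ?_
  have hk' : (N : ℤ) < |k| := by rwa [Finset.mem_Icc, ← abs_le, not_le] at hk
  simp [chainHeight_apply, φ.2 k hk', hq.ne']

lemma summable_chainCoupling_mul_chainIncrement (hβ : 0 ≤ β) (hα : 1 < α) (hq : 0 < q)
    (φ : chainGroup N) :
    Summable fun p => chainCoupling β α p * (chainIncrement N p φ ^ 2) ^ (q / 2) := by
  have hu₀ : 0 ≤ fun k => |chainHeight N k φ| ^ q := fun k => by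
    simp only [Pi.zero_apply]; positivity
  have hu := summable_chainHeight_rpow hq φ
  refine Summable.of_nonneg_of_le
    (fun p => mul_nonneg (chainCoupling_nonneg hβ p) (by positivity)) (fun p => ?_)
    (((summable_fst_mul_abs_sub_rpow hu₀ hu hα).add
      (summable_snd_mul_abs_sub_rpow hu₀ hu hα)).mul_left (β * 2 ^ q))
  rw [sq_rpow_half, chainCoupling, div_eq_mul_inv, ← Real.rpow_neg (abs_nonneg _), ← add_mul]
  calc β * |(p.1 : ℝ) - p.2| ^ (-α) * |chainHeight N p.1 φ - chainHeight N p.2 φ| ^ q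
      ≤ β * |(p.1 : ℝ) - p.2| ^ (-α) *
          (2 ^ q * (|chainHeight N p.1 φ| ^ q + |chainHeight N p.2 φ| ^ q)) := by
        gcongr; exact abs_sub_rpow_le _ _ hq.le
    _ = _ := by ring

lemma chainEnergy_eq_tsum (hq : q ≠ 0) (φ : chainGroup N) :
    chainEnergy β α q φ.1
      = ∑' p, chainCoupling β α p * (chainIncrement N p φ ^ 2) ^ (q / 2) := by
  rw [chainEnergy, ← tsum_mul_left]
  refine tsum_congr fun p => ?_
  rw [sq_rpow_half, chainIncrement_apply, chainCoupling]
  split_ifs with hp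
  · simp [hp, Real.zero_rpow hq]
  · push_cast
    ring

lemma chainWeight_eq_exp (hq : q ≠ 0) (φ : chainGroup N) :
    chainWeight β α q φ.1
      = Real.exp (-∑' p, chainCoupling β α p * (chainIncrement N p φ ^ 2) ^ (q / 2)) := by
  rw [chainWeight, chainEnergy_eq_tsum hq]

lemma summable_one_add_sq_mul_exp_neg_chainHeight_rpow {c p : ℝ} (hc : 0 < c) (hp : 0 < p) :
    Summable fun φ : chainGroup N => (1 + chainHeight N 0 φ ^ 2) *
      Real.exp (-∑ i ∈ Finset.Icc (-(N : ℤ)) N, c * |chainHeight N i φ| ^ p) := by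
  have hzero : (0 : ℤ) ∈ Finset.Icc (-(N : ℤ)) N := by simp
  have hrestrict : Function.Injective
      fun (φ : chainGroup N) (i : Finset.Icc (-(N : ℤ)) N) => φ.1 i.1 := by
    intro φ ψ h
    ext k
    by_cases hk : k ∈ Finset.Icc (-(N : ℤ)) N
    · exact congrFun h ⟨k, hk⟩
    · rw [Finset.mem_Icc, ← abs_le, not_le] at hk
      rw [φ.2 k hk, ψ.2 k hk]
  refine ((summable_one_add_sq_mul_exp_neg_sum_rpow ⟨0, hzero⟩ hc hp).comp_injective
    hrestrict).congr fun φ => ?_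
  rw [← Finset.sum_coe_sort]
  rfl

/-- The pairs joining a site of `{-N, …, N}` to the site `N + 1`, where the height vanishes. -/
noncomputable def boundaryPairs (N : ℕ) : Finset (ℤ × ℤ) :=
  (Finset.Icc (-(N : ℤ)) N) ×ˢ {(N : ℤ) + 1}

lemma le_chainCoupling_boundary (hβ : 0 ≤ β) (hα : 0 ≤ α) {i : ℤ}
    (hi : i ∈ Finset.Icc (-(N : ℤ)) N) :
    β / (2 * N + 1) ^ α ≤ chainCoupling β α (i, (N : ℤ) + 1) := by
  obtain ⟨hi₁, hi₂⟩ := Finset.mem_Icc.1 hi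
  have hi₁' : -(N : ℝ) ≤ i := by exact_mod_cast hi₁
  have hi₂' : (i : ℝ) ≤ N := by exact_mod_cast hi₂
  have hdist : |(i : ℝ) - ((N : ℤ) + 1 : ℤ)| = N + 1 - i := by
    rw [abs_of_nonpos (by push_cast; linarith)]
    push_cast
    ring
  have hpos : 0 < (N : ℝ) + 1 - i := by linarith
  rw [chainCoupling, hdist]
  gcongr
  linarith

lemma summable_one_add_sq_mul_exp_neg_boundaryPairs (hβ : 0 < β) (hα : 0 ≤ α) (hq : 0 < q) :
    Summable fun φ : chainGroup N => (1 + chainHeight N 0 φ ^ 2) *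
      Real.exp (-∑ p ∈ boundaryPairs N,
        chainCoupling β α p * (chainIncrement N p φ ^ 2) ^ (q / 2)) := by
  refine summable_one_add_sq_mul_of_le (fun _ => Real.exp_nonneg _)
    (fun φ => Real.exp_le_exp.2 (neg_le_neg ?_))
    (summable_one_add_sq_mul_exp_neg_chainHeight_rpow (c := β / (2 * N + 1) ^ α) (by positivity) hq)
  rw [boundaryPairs, Finset.sum_product]
  refine Finset.sum_le_sum fun i hi => ?_
  have hout : φ.1 ((N : ℤ) + 1) = 0 := φ.2 _ (by rw [abs_of_nonneg (by positivity)]; simp)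
  rw [Finset.sum_singleton, sq_rpow_half, chainIncrement_apply, hout, Int.cast_zero, sub_zero]
  exact mul_le_mul_of_nonneg_right (le_chainCoupling_boundary hβ.le hα hi) (by positivity)

lemma summable_chainWeight (hβ : 0 < β) (hα : 1 < α) (hq : 0 < q) :
    Summable fun φ : chainGroup N => chainWeight β α q φ.1 := by
  refine summable_of_one_add_sq_mul (f := chainHeight N 0) (fun _ => Real.exp_nonneg _)
    (summable_one_add_sq_mul_of_le (fun _ => Real.exp_nonneg _) (fun φ => ?_)
      (summable_one_add_sq_mul_exp_neg_boundaryPairs hβ (zero_le_one.trans hα.le) hq))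
  rw [chainWeight_eq_exp hq.ne']
  exact Real.exp_le_exp.2 (neg_le_neg
    ((summable_chainCoupling_mul_chainIncrement hβ.le hα hq φ).sum_le_tsum _
      fun p _ => mul_nonneg (chainCoupling_nonneg hβ.le p) (by positivity)))

lemma chainEnergy_neg (β α q : ℝ) (φ : ℤ → ℤ) : chainEnergy β α q (-φ) = chainEnergy β α q φ := by
  have habs (i j : ℤ) : |(((-φ) i - (-φ) j : ℤ) : ℝ)| = |((φ i - φ j : ℤ) : ℝ)| := by
    rw [Pi.neg_apply, Pi.neg_apply, neg_sub_neg, ← neg_sub (φ i), Int.cast_neg, abs_neg]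
  simp_rw [chainEnergy, habs]

lemma chainMean_eq_zero (N : ℕ) (β α q : ℝ) : chainMean N β α q = 0 := by
  have hsymm := (Equiv.neg (chainGroup N)).tsum_eq
    fun φ => chainHeight N 0 φ * chainWeight β α q φ.1
  simp only [Equiv.neg_apply, map_neg, AddSubgroup.coe_neg, chainWeight, chainEnergy_neg, neg_mul,
    tsum_neg] at hsymm
  exact div_eq_zero_iff.2 (Or.inl (self_eq_neg.1 hsymm.symm))

lemma le_chainVar_of_secondMomentBound (hβ : 0 < β) (hα : 1 < α) (hq : 0 < q) {r : ℝ}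
    (h : SecondMomentBound (chainHeight N 0) (fun φ => chainWeight β α q φ.1) r) :
    r ≤ chainVar N β α q := by
  have hZ : 0 < chainZ N β α q :=
    (summable_chainWeight hβ hα hq).tsum_pos (fun _ => Real.exp_nonneg _) 0 (Real.exp_pos _)
  rw [chainVar, chainMean_eq_zero, zero_pow two_ne_zero, sub_zero, le_div_iff₀ hZ]
  exact h

end Chain

section BlockProfile

/-- Blocks of length `ℓ` are stacked radially; block `k` ends at radius `(k + 1) * ℓ`. These are
the blocks that end strictly beyond the site `i`. -/
def outerBlocks (ℓ m : ℕ) (i : ℤ) : Finset (Fin m) :=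
  {k | i.natAbs < (k + 1) * ℓ}

/-- The blocks whose outer end separates the two sites of `p` radially. -/
def separatingBlocks (ℓ m : ℕ) (p : ℤ × ℤ) : Finset (Fin m) :=
  {k | min p.1.natAbs p.2.natAbs < (k + 1) * ℓ ∧ (k + 1) * ℓ ≤ max p.1.natAbs p.2.natAbs}

variable {N ℓ m : ℕ}

lemma separatingBlocks_swap (p : ℤ × ℤ) : separatingBlocks ℓ m p.swap = separatingBlocks ℓ m p := by
  simp only [separatingBlocks, Prod.fst_swap, Prod.snd_swap, min_comm, max_comm]

lemma outerBlocks_zero (hℓ : 0 < ℓ) : outerBlocks ℓ m 0 = Finset.univ := by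
  simp [outerBlocks, Finset.filter_true_of_mem, hℓ]

lemma outerBlocks_eq_empty (hm : m * ℓ ≤ N + 1) {i : ℤ} (hi : (N : ℤ) < |i|) :
    outerBlocks ℓ m i = ∅ := by
  refine Finset.filter_eq_empty_iff.2 fun k _ => ?_
  have hk : ((k : ℕ) + 1) * ℓ ≤ m * ℓ := Nat.mul_le_mul_right ℓ k.2
  rw [Int.abs_eq_natAbs] at hi
  lia

lemma outerBlocks_mul (hℓ : 0 < ℓ) (k : Fin m) :
    outerBlocks ℓ m ((k * ℓ : ℕ) : ℤ)
      = insert k (outerBlocks ℓ m (((k + 1) * ℓ : ℕ) : ℤ)) := by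
  ext j
  simp only [outerBlocks, Finset.mem_filter_univ, Finset.mem_insert, Int.natAbs_natCast,
    Nat.mul_lt_mul_right hℓ, Fin.ext_iff]
  lia

lemma sum_outerBlocks_sub (X : Fin m → ℤ) {i j : ℤ} (hij : i.natAbs ≤ j.natAbs) :
    ∑ k ∈ outerBlocks ℓ m i, X k - ∑ k ∈ outerBlocks ℓ m j, X k
      = ∑ k ∈ separatingBlocks ℓ m (i, j), X k := by
  have hsub : outerBlocks ℓ m j ⊆ outerBlocks ℓ m i := fun k => by
    simp only [outerBlocks, Finset.mem_filter_univ]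
    exact hij.trans_lt
  have hsdiff : separatingBlocks ℓ m (i, j) = outerBlocks ℓ m i \ outerBlocks ℓ m j := by
    ext k
    simp [separatingBlocks, outerBlocks, hij]
  rw [hsdiff, ← Finset.sum_sdiff hsub, add_sub_cancel_right]

/-- The radial step configuration which drops by `X k` at radius `(k + 1) * ℓ` and vanishes beyond
the last block. -/
def blockProfile (hm : m * ℓ ≤ N + 1) : (Fin m → ℤ) →+ chainGroup N where
  toFun X := ⟨fun i => ∑ k ∈ outerBlocks ℓ m i, X k, fun i hi => by
    simp [outerBlocks_eq_empty hm hi]⟩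
  map_zero' := by ext; simp
  map_add' X Y := by ext; simp [Finset.sum_add_distrib]

lemma blockProfile_apply (hm : m * ℓ ≤ N + 1) (X : Fin m → ℤ) (i : ℤ) :
    (blockProfile hm X).1 i = ∑ k ∈ outerBlocks ℓ m i, X k := rfl

lemma blockProfile_injective (hm : m * ℓ ≤ N + 1) (hℓ : 0 < ℓ) :
    Function.Injective (blockProfile hm) := by
  have hdrop (X : Fin m → ℤ) (k : Fin m) :
      X k = (blockProfile hm X).1 ((k * ℓ : ℕ) : ℤ)
        - (blockProfile hm X).1 (((k + 1) * ℓ : ℕ) : ℤ) := by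
    rw [blockProfile_apply, blockProfile_apply, outerBlocks_mul hℓ, Finset.sum_insert,
      add_sub_cancel_right]
    simp only [outerBlocks, Finset.mem_filter_univ, Int.natAbs_natCast, lt_irrefl,
      not_false_eq_true]
  intro X Y h
  funext k
  rw [hdrop X k, hdrop Y k, h]

lemma restrictsToSum_chainHeight (hm : m * ℓ ≤ N + 1) (i : ℤ) :
    RestrictsToSum (blockProfile hm) (chainHeight N i) (outerBlocks ℓ m i) := fun X => by
  rw [chainHeight_apply, blockProfile_apply, Int.cast_sum]

lemma restrictsToSum_chainIncrement (hm : m * ℓ ≤ N + 1) (p : ℤ × ℤ) :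
    RestrictsToSum (blockProfile hm) (chainIncrement N p) (separatingBlocks ℓ m p) := fun X => by
  rw [chainIncrement_apply, blockProfile_apply, blockProfile_apply]
  rcases le_total p.1.natAbs p.2.natAbs with h | h
  · rw [← Int.cast_sub, sum_outerBlocks_sub X h, Int.cast_sum]
  · rw [← separatingBlocks_swap, ← neg_sq, neg_sub, ← Int.cast_sub, sum_outerBlocks_sub X h,
      Int.cast_sum, Prod.swap]

lemma sum_csCoeff_outerBlocks_pos (hℓ : 0 < ℓ) (k : Fin m) :
    0 < ∑ i ∈ Finset.Icc (-(N : ℤ)) N, csCoeff (outerBlocks ℓ m i) k := by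
  refine Finset.sum_pos' (fun i _ => csCoeff_nonneg _ k) ⟨0, by simp, ?_⟩
  simpa [outerBlocks_zero hℓ, csCoeff] using k.pos

variable {β α q : ℝ}

theorem secondMomentBound_chainWeight (hβ : 0 < β) (hα : 1 < α) (hq₀ : 0 < q) (hq₂ : q < 2)
    (hℓ : 0 < ℓ) (hm : m * ℓ ≤ N + 1)
    (hs : ∀ k, Summable fun p =>
      chainCoupling β α p * csCoeff (separatingBlocks ℓ m p) k ^ (q / 2)) :
    SecondMomentBound (chainHeight N 0) (fun φ => chainWeight β α q φ.1)
      (2 / 3 * ∑ k, Real.exp (-∑' p,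
        chainCoupling β α p * csCoeff (separatingBlocks ℓ m p) k ^ (q / 2))) := by
  simp_rw [chainWeight_eq_exp hq₀.ne']
  refine secondMomentBound_stable_tsum (A := boundaryPairs N)
    (Q := fun φ => ∑ i ∈ Finset.Icc (-(N : ℤ)) N, chainHeight N i φ ^ 2)
    (κ := fun k => ∑ i ∈ Finset.Icc (-(N : ℤ)) N, csCoeff (outerBlocks ℓ m i) k)
    (blockProfile_injective hm hℓ) (fun X => ?_) (restrictsToSum_chainIncrement hm)
    (by linarith) (by linarith) (chainCoupling_nonneg hβ.le) (fun δ hδ => ?_)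
    (sum_csCoeff_outerBlocks_pos hℓ) (fun φ => by positivity) (fun δ hδ => ?_)
    (summable_one_add_sq_mul_exp_neg_boundaryPairs hβ (zero_le_one.trans hα.le) hq₀)
    (summable_chainCoupling_mul_chainIncrement hβ.le hα hq₀) hs
  · rw [chainHeight_apply, blockProfile_apply, outerBlocks_zero hℓ, Int.cast_sum]
  · simp_rw [Finset.mul_sum]
    exact DiagonalMajorant.sum_sq (restrictsToSum_chainHeight hm) (fun _ => hδ.le) _
  · simpa [Finset.mul_sum] using
      summable_one_add_sq_mul_exp_neg_chainHeight_rpow (N := N) hδ two_pos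

theorem le_chainVar_of_forall_sum_le (hβ : 0 < β) (hα : 1 < α) (hq₀ : 0 < q) (hq₂ : q < 2)
    (hℓ : 0 < ℓ) (hm : m * ℓ ≤ N + 1) {C : ℝ}
    (hC : ∀ (k : Fin m) (S : Finset (ℤ × ℤ)),
      ∑ p ∈ S, chainCoupling β α p * csCoeff (separatingBlocks ℓ m p) k ^ (q / 2) ≤ C) :
    2 / 3 * (m * Real.exp (-C)) ≤ chainVar N β α q := by
  have hs (k : Fin m) : Summable fun p =>
      chainCoupling β α p * csCoeff (separatingBlocks ℓ m p) k ^ (q / 2) :=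
    summable_of_sum_le (fun p => mul_nonneg (chainCoupling_nonneg hβ.le p)
      (Real.rpow_nonneg (csCoeff_nonneg _ k) _)) (hC k)
  refine le_trans ?_ (le_chainVar_of_secondMomentBound hβ hα hq₀
    (secondMomentBound_chainWeight hβ hα hq₀ hq₂ hℓ hm hs))
  have hcard : (m : ℝ) * Real.exp (-C) = ∑ _k : Fin m, Real.exp (-C) := by simp
  rw [hcard]
  gcongr with k
  exact (hs k).tsum_le_of_sum_le (hC k)

end BlockProfile

section CrossingSum

lemma card_separatingBlocks_le {ℓ : ℕ} (hℓ : 0 < ℓ) (m : ℕ) (p : ℤ × ℤ) :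
    ((separatingBlocks ℓ m p).card : ℝ)
      ≤ ((max p.1.natAbs p.2.natAbs : ℕ) - (min p.1.natAbs p.2.natAbs : ℕ) : ℝ) / ℓ + 1 := by
  obtain ⟨a, ha⟩ : ∃ a, min p.1.natAbs p.2.natAbs = a := ⟨_, rfl⟩
  obtain ⟨c, hc⟩ : ∃ c, max p.1.natAbs p.2.natAbs = c := ⟨_, rfl⟩
  have hac : a ≤ c := ha ▸ hc ▸ min_le_max
  have hcard : (separatingBlocks ℓ m p).card ≤ (Finset.Ioc (a / ℓ) (c / ℓ)).card := by
    refine Finset.card_le_card_of_injOn (fun k => k.1 + 1) (fun k hk => ?_)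
      (fun k _ j _ hkj => Fin.ext (by simpa using hkj))
    simp only [separatingBlocks, Finset.mem_coe, Finset.mem_filter_univ, ha, hc] at hk
    simpa [Nat.div_lt_iff_lt_mul hℓ, Nat.le_div_iff_mul_le hℓ] using hk
  rw [Nat.card_Ioc] at hcard
  have hlower : (a : ℝ) / ℓ < (a / ℓ : ℕ) + 1 := by
    rw [div_lt_iff₀ (by positivity)]
    have hdiv : a < (a / ℓ + 1) * ℓ := by rw [add_mul, one_mul]; exact Nat.lt_div_mul_add hℓ
    exact_mod_cast hdiv
  rw [ha, hc]
  calc ((separatingBlocks ℓ m p).card : ℝ) ≤ (c / ℓ - a / ℓ : ℕ) := by exact_mod_cast hcard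
    _ = (c / ℓ : ℕ) - (a / ℓ : ℕ) := Nat.cast_sub (Nat.div_le_div_right hac)
    _ ≤ (c : ℝ) / ℓ - (a : ℝ) / ℓ + 1 := by linarith [Nat.cast_div_le (α := ℝ) (m := c) (n := ℓ)]
    _ = ((c : ℝ) - a) / ℓ + 1 := by rw [sub_div]

lemma rpow_div_rpow_le {θ L d u R D : ℝ} (hθ₀ : 0 ≤ θ) (hθ₁ : θ ≤ 1) (hL : 0 < L) (hu : 0 < u)
    (hud : u ≤ d) (hdD : d ≤ D) (hR₀ : 0 ≤ R) (hR : R ≤ d / L + 1) :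
    R ^ θ / D ^ (2 + θ) ≤ (L ^ (-θ) + u ^ (-θ)) / d ^ 2 := by
  have hd : 0 < d := hu.trans_le hud
  have hRθ : R ^ θ ≤ d ^ θ / L ^ θ + 1 := by
    calc R ^ θ ≤ (d / L + 1) ^ θ := Real.rpow_le_rpow hR₀ hR hθ₀
      _ ≤ (d / L) ^ θ + 1 ^ θ := Real.rpow_add_le_add_rpow (by positivity) zero_le_one hθ₀ hθ₁
      _ = d ^ θ / L ^ θ + 1 := by rw [Real.div_rpow hd.le hL.le, Real.one_rpow]
  have hduθ : d ^ (-θ) ≤ u ^ (-θ) := Real.rpow_le_rpow_of_nonpos hu hud (neg_nonpos.2 hθ₀)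
  calc R ^ θ / D ^ (2 + θ) ≤ (d ^ θ / L ^ θ + 1) / d ^ (2 + θ) := by gcongr
    _ = (L ^ (-θ) + d ^ (-θ)) / d ^ 2 := by
        rw [Real.rpow_add hd, Real.rpow_two, Real.rpow_neg hL.le, Real.rpow_neg hd.le]
        field_simp
    _ ≤ (L ^ (-θ) + u ^ (-θ)) / d ^ 2 := by gcongr

/-- Upper bound for the energy cost of a unit step of block length `ℓ` at radius `A`, felt by two
sites at radii `a` and `b`, in units of `β`. -/
noncomputable def crossingCost (θ : ℝ) (ℓ A a b : ℕ) : ℝ :=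
  if a < A ∧ A ≤ b then ((ℓ : ℝ) ^ (-θ) + ((A : ℝ) - a) ^ (-θ)) / ((b : ℝ) - a) ^ 2 else 0

variable {θ : ℝ}

lemma crossingCost_nonneg (θ : ℝ) (ℓ A a b : ℕ) : 0 ≤ crossingCost θ ℓ A a b := by
  unfold crossingCost
  split_ifs with h
  · have : (0 : ℝ) ≤ (A : ℝ) - a := sub_nonneg.2 (by exact_mod_cast h.1.le)
    positivity
  · exact le_rfl

lemma rpow_csCoeff_div_le_of_le (hθ₀ : 0 < θ) (hθ₁ : θ ≤ 1) {ℓ m : ℕ} (hℓ : 0 < ℓ) (k : Fin m)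
    {p : ℤ × ℤ} (hp : p.1.natAbs ≤ p.2.natAbs) :
    csCoeff (separatingBlocks ℓ m p) k ^ θ / |(p.1 : ℝ) - p.2| ^ (2 + θ)
      ≤ crossingCost θ ℓ ((k + 1) * ℓ) p.1.natAbs p.2.natAbs := by
  by_cases hk : k ∈ separatingBlocks ℓ m p
  · have hcard := card_separatingBlocks_le hℓ m p
    rw [max_eq_right hp, min_eq_left hp] at hcard
    rw [csCoeff, if_pos hk]
    simp only [separatingBlocks, Finset.mem_filter_univ, max_eq_right hp, min_eq_left hp] at hk
    have hlower : (p.1.natAbs : ℝ) < ((k + 1) * ℓ : ℕ) := by exact_mod_cast hk.1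
    have hupper : (((k + 1) * ℓ : ℕ) : ℝ) ≤ p.2.natAbs := by exact_mod_cast hk.2
    have hdist : (p.2.natAbs : ℝ) - p.1.natAbs ≤ |(p.1 : ℝ) - p.2| := by
      simpa [Nat.cast_natAbs, abs_sub_comm] using abs_sub_abs_le_abs_sub (p.2 : ℝ) p.1
    rw [crossingCost, if_pos hk]
    exact rpow_div_rpow_le hθ₀.le hθ₁ (by positivity) (by linarith) (by linarith) hdist
      (by positivity) hcard
  · rw [csCoeff, if_neg hk, Real.zero_rpow hθ₀.ne', zero_div]
    exact crossingCost_nonneg ..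

lemma chainCoupling_mul_csCoeff_le {β : ℝ} (hβ : 0 ≤ β) (hθ₀ : 0 < θ) (hθ₁ : θ ≤ 1) {ℓ m : ℕ}
    (hℓ : 0 < ℓ) (k : Fin m) (p : ℤ × ℤ) :
    chainCoupling β (2 + θ) p * csCoeff (separatingBlocks ℓ m p) k ^ θ
      ≤ β * (crossingCost θ ℓ ((k + 1) * ℓ) p.1.natAbs p.2.natAbs
        + crossingCost θ ℓ ((k + 1) * ℓ) p.2.natAbs p.1.natAbs) := by
  rw [chainCoupling, div_mul_eq_mul_div, mul_div_assoc]
  refine mul_le_mul_of_nonneg_left ?_ hβ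
  rcases le_total p.1.natAbs p.2.natAbs with h | h
  · exact (rpow_csCoeff_div_le_of_le hθ₀ hθ₁ hℓ k h).trans
      (le_add_of_nonneg_right (crossingCost_nonneg ..))
  · rw [← separatingBlocks_swap, abs_sub_comm]
    exact (rpow_csCoeff_div_le_of_le hθ₀ hθ₁ hℓ k (p := p.swap) h).trans
      (le_add_of_nonneg_left (crossingCost_nonneg ..))

lemma sum_natAbs_le {f : ℕ → ℝ} (hf : ∀ a, 0 ≤ f a) {C : ℝ}
    (hC : ∀ T : Finset ℕ, ∑ a ∈ T, f a ≤ C) (S : Finset ℤ) :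
    ∑ i ∈ S, f i.natAbs ≤ 2 * C := by
  have hfiber (a : ℕ) : (S.filter fun i => i.natAbs = a).card ≤ 2 :=
    (Finset.card_le_card (t := {(a : ℤ), -(a : ℤ)}) fun i hi => by
      simpa using Int.natAbs_eq_iff.1 (Finset.mem_filter.1 hi).2).trans Finset.card_le_two
  calc ∑ i ∈ S, f i.natAbs
      = ∑ a ∈ S.image Int.natAbs, ((S.filter fun i => i.natAbs = a).card : ℝ) * f a := by
        simp_rw [Finset.sum_comp f Int.natAbs, nsmul_eq_mul]
    _ ≤ ∑ a ∈ S.image Int.natAbs, 2 * f a :=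
        Finset.sum_le_sum fun a _ => mul_le_mul_of_nonneg_right (by exact_mod_cast hfiber a) (hf a)
    _ ≤ 2 * C := by rw [← Finset.mul_sum]; gcongr; exact hC _

lemma sum_natAbs_natAbs_le {f : ℕ → ℕ → ℝ} (hf : ∀ a b, 0 ≤ f a b) {C : ℝ}
    (hC : ∀ S T : Finset ℕ, ∑ a ∈ S, ∑ b ∈ T, f a b ≤ C) (U : Finset (ℤ × ℤ)) :
    ∑ p ∈ U, f p.1.natAbs p.2.natAbs ≤ 4 * C := by
  calc ∑ p ∈ U, f p.1.natAbs p.2.natAbs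
      ≤ ∑ p ∈ U.image Prod.fst ×ˢ U.image Prod.snd, f p.1.natAbs p.2.natAbs :=
        Finset.sum_le_sum_of_subset_of_nonneg Finset.subset_product fun _ _ _ => hf _ _
    _ = ∑ j ∈ U.image Prod.snd, ∑ i ∈ U.image Prod.fst, f i.natAbs j.natAbs :=
        Finset.sum_product_right _ _ _
    _ ≤ 2 * (2 * C) := by
        rw [Finset.sum_comm]
        refine sum_natAbs_le (f := fun a => ∑ j ∈ U.image Prod.snd, f a j.natAbs)
          (fun a => Finset.sum_nonneg fun _ _ => hf _ _) (fun S => ?_) _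
        rw [Finset.sum_comm]
        refine sum_natAbs_le (f := fun b => ∑ a ∈ S, f a b)
          (fun b => Finset.sum_nonneg fun _ _ => hf _ _) (fun T => ?_) _
        rw [Finset.sum_comm]
        exact hC S T
    _ = 4 * C := by ring

lemma sum_inv_sub_sq_le {a A : ℕ} (ha : a < A) {T : Finset ℕ} (hT : ∀ b ∈ T, A ≤ b) :
    ∑ b ∈ T, (((b : ℝ) - a) ^ 2)⁻¹ ≤ 2 / ((A : ℝ) - a) := by
  have hshift : ∑ b ∈ T, (((b : ℝ) - a) ^ 2)⁻¹ = ∑ d ∈ T.image (· - a), ((d : ℝ) ^ 2)⁻¹ := by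
    rw [Finset.sum_image fun b hb b' hb' h => by have := hT b hb; have := hT b' hb'; lia]
    refine Finset.sum_congr rfl fun b hb => ?_
    rw [Nat.cast_sub (ha.le.trans (hT b hb))]
  have hsub : T.image (· - a) ⊆ Finset.Ioo (A - a - 1) ((T.image (· - a)).sup id + 1) := by
    intro d hd
    have hle : d ≤ (T.image (· - a)).sup id := Finset.le_sup (f := id) hd
    obtain ⟨b, hb, rfl⟩ := Finset.mem_image.1 hd
    have := hT b hb
    exact Finset.mem_Ioo.2 (by lia)
  have hcast : ((A - a - 1 : ℕ) : ℝ) + 1 = (A : ℝ) - a := by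
    rw [← Nat.cast_sub ha.le, ← Nat.cast_succ, Nat.succ_eq_add_one, Nat.sub_add_cancel (by lia)]
  rw [hshift, ← hcast]
  exact (Finset.sum_le_sum_of_subset_of_nonneg hsub fun _ _ _ => by positivity).trans
    (sum_Ioo_inv_sq_le _ _)

lemma sum_crossingCost_right_le {a A : ℕ} (ha : a < A) (θ : ℝ) (ℓ : ℕ) (T : Finset ℕ) :
    ∑ b ∈ T, crossingCost θ ℓ A a b
      ≤ ((ℓ : ℝ) ^ (-θ) + ((A : ℝ) - a) ^ (-θ)) * (2 / ((A : ℝ) - a)) := by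
  have hpos : (0 : ℝ) ≤ (A : ℝ) - a := sub_nonneg.2 (by exact_mod_cast ha.le)
  simp_rw [crossingCost, ha, true_and, ← Finset.sum_filter, div_eq_mul_inv (_ + _),
    ← Finset.mul_sum]
  exact mul_le_mul_of_nonneg_left
    (sum_inv_sub_sq_le ha fun b hb => (Finset.mem_filter.1 hb).2) (by positivity)

lemma sum_crossingCost_le_sum_range (θ : ℝ) (ℓ A : ℕ) (S T : Finset ℕ) :
    ∑ a ∈ S, ∑ b ∈ T, crossingCost θ ℓ A a b
      ≤ ∑ j ∈ Finset.range A, ((ℓ : ℝ) ^ (-θ) + ((j : ℝ) + 1) ^ (-θ)) * (2 / ((j : ℝ) + 1)) := by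
  have hnonneg (a : ℕ) : 0 ≤ ∑ b ∈ T, crossingCost θ ℓ A a b :=
    Finset.sum_nonneg fun b _ => crossingCost_nonneg θ ℓ A a b
  have hout (a : ℕ) (ha : a ∉ Finset.range A) : ∑ b ∈ T, crossingCost θ ℓ A a b = 0 :=
    Finset.sum_eq_zero fun b _ => if_neg fun h => ha (Finset.mem_range.2 h.1)
  have hrestrict : ∑ a ∈ S, ∑ b ∈ T, crossingCost θ ℓ A a b
      ≤ ∑ a ∈ Finset.range A, ∑ b ∈ T, crossingCost θ ℓ A a b := by
    rw [← Finset.sum_filter_of_ne (p := (· ∈ Finset.range A))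
      fun a _ h => by_contra fun ha => h (hout a ha)]
    exact Finset.sum_le_sum_of_subset_of_nonneg
      (fun a ha => (Finset.mem_filter.1 ha).2) fun a _ _ => hnonneg a
  rw [← Finset.sum_range_reflect]
  refine hrestrict.trans (Finset.sum_le_sum fun a ha => ?_)
  have ha' := Finset.mem_range.1 ha
  have hcast : ((A - 1 - a : ℕ) : ℝ) + 1 = (A : ℝ) - a := by
    rw [← Nat.cast_sub ha'.le, ← Nat.cast_succ, Nat.succ_eq_add_one]
    congr 1
    lia
  rw [hcast]
  exact sum_crossingCost_right_le ha' θ ℓ T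

lemma summable_add_one_rpow_neg_one_add (hθ : 0 < θ) :
    Summable fun j : ℕ => ((j : ℝ) + 1) ^ (-(1 + θ)) := by
  simpa using (summable_nat_add_iff 1).2 (Real.summable_nat_rpow (p := -(1 + θ)).2 (by linarith))

lemma sum_crossingCost_le (hθ : 0 < θ) (ℓ A : ℕ) (S T : Finset ℕ) :
    ∑ a ∈ S, ∑ b ∈ T, crossingCost θ ℓ A a b
      ≤ 2 * ((ℓ : ℝ) ^ (-θ) * (1 + Real.log A) + ∑' j : ℕ, ((j : ℝ) + 1) ^ (-(1 + θ))) := by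
  have hterm (j : ℕ) : ((ℓ : ℝ) ^ (-θ) + ((j : ℝ) + 1) ^ (-θ)) * (2 / ((j : ℝ) + 1))
      = 2 * ((ℓ : ℝ) ^ (-θ) * ((j : ℝ) + 1)⁻¹ + ((j : ℝ) + 1) ^ (-(1 + θ))) := by
    rw [neg_add_rev, Real.rpow_add (by positivity), Real.rpow_neg_one]
    ring
  have hharmonic : ∑ j ∈ Finset.range A, ((j : ℝ) + 1)⁻¹ ≤ 1 + Real.log A := by
    simpa [harmonic] using harmonic_le_one_add_log A
  have hzeta := (summable_add_one_rpow_neg_one_add hθ).sum_le_tsum (Finset.range A)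
    fun _ _ => by positivity
  refine (sum_crossingCost_le_sum_range θ ℓ A S T).trans ?_
  simp_rw [hterm, ← Finset.mul_sum, Finset.sum_add_distrib, ← Finset.mul_sum]
  gcongr

theorem sum_chainCoupling_mul_csCoeff_le {β : ℝ} (hβ : 0 ≤ β) (hθ₀ : 0 < θ) (hθ₁ : θ ≤ 1)
    {ℓ m N : ℕ} (hℓ : 0 < ℓ) (hm : m * ℓ ≤ N + 1) (k : Fin m) (S : Finset (ℤ × ℤ)) :
    ∑ p ∈ S, chainCoupling β (2 + θ) p * csCoeff (separatingBlocks ℓ m p) k ^ θ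
      ≤ 16 * β * ((ℓ : ℝ) ^ (-θ) * (1 + Real.log (N + 1))
        + ∑' j : ℕ, ((j : ℝ) + 1) ^ (-(1 + θ))) := by
  have hradius : ((k : ℕ) + 1) * ℓ ≤ N + 1 := (Nat.mul_le_mul_right ℓ k.2).trans hm
  have hlog : Real.log (((k : ℕ) + 1) * ℓ : ℕ) ≤ Real.log (N + 1) :=
    Real.log_le_log (by positivity) (by exact_mod_cast hradius)
  have hsum := sum_crossingCost_le hθ₀ ℓ ((k + 1) * ℓ)
  have hinner := sum_natAbs_natAbs_le (fun a b => crossingCost_nonneg θ ℓ ((k + 1) * ℓ) a b) hsum S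
  have houter := sum_natAbs_natAbs_le (fun a b => crossingCost_nonneg θ ℓ ((k + 1) * ℓ) b a)
    (fun S T => Finset.sum_comm.trans_le (hsum T S)) S
  calc ∑ p ∈ S, chainCoupling β (2 + θ) p * csCoeff (separatingBlocks ℓ m p) k ^ θ
      ≤ β * (∑ p ∈ S, crossingCost θ ℓ ((k + 1) * ℓ) p.1.natAbs p.2.natAbs
          + ∑ p ∈ S, crossingCost θ ℓ ((k + 1) * ℓ) p.2.natAbs p.1.natAbs) := by
        rw [← Finset.sum_add_distrib, Finset.mul_sum]
        exact Finset.sum_le_sum fun p _ => chainCoupling_mul_csCoeff_le hβ hθ₀ hθ₁ hℓ k p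
    _ ≤ β * (8 * (2 * ((ℓ : ℝ) ^ (-θ) * (1 + Real.log (((k : ℕ) + 1) * ℓ : ℕ))
          + ∑' j : ℕ, ((j : ℝ) + 1) ^ (-(1 + θ))))) :=
        mul_le_mul_of_nonneg_left (by linarith) hβ
    _ = 16 * β * ((ℓ : ℝ) ^ (-θ) * (1 + Real.log (((k : ℕ) + 1) * ℓ : ℕ))
          + ∑' j : ℕ, ((j : ℝ) + 1) ^ (-(1 + θ))) := by ring
    _ ≤ _ := by gcongr

end CrossingSum

section BlockLength

variable {θ : ℝ} {N : ℕ}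

/-- The block length used for the chain of length `N`: of order `(log N) ^ (1 / θ)`, which makes
the logarithmic part of the step energy bounded, and truncated at `N + 1` so that one block fits. -/
noncomputable def blockLength (θ : ℝ) (N : ℕ) : ℕ := min ⌈Real.log N ^ θ⁻¹⌉₊ (N + 1)

lemma log_two_le_log (hN : 2 ≤ N) : Real.log 2 ≤ Real.log N :=
  Real.log_le_log two_pos (by exact_mod_cast hN)

lemma log_pos_of_two_le (hN : 2 ≤ N) : 0 < Real.log N :=
  (Real.log_pos one_lt_two).trans_le (log_two_le_log hN)

lemma blockLength_pos (θ : ℝ) (hN : 2 ≤ N) : 0 < blockLength θ N :=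
  lt_min (Nat.ceil_pos.2 (Real.rpow_pos_of_pos (log_pos_of_two_le hN) _)) N.succ_pos

lemma blockLength_le (θ : ℝ) (N : ℕ) : blockLength θ N ≤ N + 1 := min_le_right _ _

lemma one_add_log_add_one_le (hN : 2 ≤ N) : 1 + Real.log (N + 1) ≤ 4 * Real.log N := by
  have hN' : (2 : ℝ) ≤ N := by exact_mod_cast hN
  have hsq : Real.log (N + 1) ≤ 2 * Real.log N := by
    calc Real.log (N + 1) ≤ Real.log ((N : ℝ) ^ 2) := Real.log_le_log (by positivity) (by nlinarith)
      _ = 2 * Real.log N := by rw [Real.log_pow, Nat.cast_ofNat]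
  linarith [Real.log_two_gt_d9, log_two_le_log hN]

lemma one_add_log_add_one_le_rpow (hθ : 0 < θ) (N : ℕ) :
    1 + Real.log (N + 1) ≤ (1 + θ⁻¹) * ((N : ℝ) + 1) ^ θ := by
  have hlog := Real.log_le_rpow_div (by positivity : (0 : ℝ) ≤ N + 1) hθ
  have hone : 1 ≤ ((N : ℝ) + 1) ^ θ := Real.one_le_rpow (by simp) hθ.le
  rw [one_add_mul, inv_mul_eq_div]
  exact add_le_add hone hlog

lemma rpow_neg_blockLength_mul_le (hθ : 0 < θ) (hN : 2 ≤ N) :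
    (blockLength θ N : ℝ) ^ (-θ) * (1 + Real.log (N + 1)) ≤ 4 + θ⁻¹ := by
  have hℓ : (0 : ℝ) < blockLength θ N := by exact_mod_cast blockLength_pos θ hN
  have hlog := log_pos_of_two_le hN
  rw [Real.rpow_neg hℓ.le, inv_mul_le_iff₀ (by positivity), mul_comm]
  rcases le_total ⌈Real.log N ^ θ⁻¹⌉₊ (N + 1) with h | h
  · have hle : Real.log N ≤ (blockLength θ N : ℝ) ^ θ := by
      calc Real.log N = (Real.log N ^ θ⁻¹) ^ θ := (Real.rpow_inv_rpow hlog.le hθ.ne').symm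
        _ ≤ (blockLength θ N : ℝ) ^ θ := by
            rw [blockLength, min_eq_left h]
            exact Real.rpow_le_rpow (by positivity) (Nat.le_ceil _) hθ.le
    calc 1 + Real.log (N + 1) ≤ 4 * Real.log N := one_add_log_add_one_le hN
      _ ≤ (4 + θ⁻¹) * (blockLength θ N : ℝ) ^ θ :=
          mul_le_mul (le_add_of_nonneg_right (by positivity)) hle hlog.le (by positivity)
  · rw [blockLength, min_eq_right h, Nat.cast_add_one]
    exact (one_add_log_add_one_le_rpow hθ N).trans (by gcongr; norm_num)

lemma blockLength_le_mul_rpow_log (hθ : 0 < θ) (hN : 2 ≤ N) :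
    (blockLength θ N : ℝ) ≤ (1 + (Real.log 2 ^ θ⁻¹)⁻¹) * Real.log N ^ θ⁻¹ := by
  have hlog₂ : 0 < Real.log 2 := Real.log_pos one_lt_two
  have hlog := log_pos_of_two_le hN
  have hone : 1 ≤ (Real.log 2 ^ θ⁻¹)⁻¹ * Real.log N ^ θ⁻¹ := by
    rw [inv_mul_eq_div, one_le_div (by positivity)]
    exact Real.rpow_le_rpow hlog₂.le (log_two_le_log hN) (by positivity)
  calc (blockLength θ N : ℝ) ≤ ⌈Real.log N ^ θ⁻¹⌉₊ := by exact_mod_cast min_le_left _ _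
    _ ≤ Real.log N ^ θ⁻¹ + 1 := (Nat.ceil_lt_add_one (by positivity)).le
    _ ≤ (1 + (Real.log 2 ^ θ⁻¹)⁻¹) * Real.log N ^ θ⁻¹ := by linarith

lemma cast_div_two_mul_le_cast_div {n ℓ : ℕ} (hℓ : 0 < ℓ) (hℓn : ℓ ≤ n) :
    (n : ℝ) / (2 * ℓ) ≤ (n / ℓ : ℕ) := by
  have hone : 1 ≤ n / ℓ := (Nat.one_le_div_iff hℓ).2 hℓn
  have hlt : n < n / ℓ * ℓ + ℓ := Nat.lt_div_mul_add hℓ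
  have hle : n ≤ n / ℓ * (2 * ℓ) := by nlinarith
  rw [div_le_iff₀ (by positivity)]
  exact_mod_cast hle

lemma div_rpow_log_le_cast_div_blockLength (hθ : 0 < θ) (hN : 2 ≤ N) :
    N / (2 * ((1 + (Real.log 2 ^ θ⁻¹)⁻¹) * Real.log N ^ θ⁻¹))
      ≤ ((N + 1) / blockLength θ N : ℕ) := by
  have hℓ := blockLength_pos θ hN
  calc N / (2 * ((1 + (Real.log 2 ^ θ⁻¹)⁻¹) * Real.log N ^ θ⁻¹))
      ≤ ((N + 1 : ℕ) : ℝ) / (2 * blockLength θ N) := by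
        gcongr
        · exact N.le_succ
        · exact blockLength_le_mul_rpow_log hθ hN
    _ ≤ _ := cast_div_two_mul_le_cast_div hℓ (blockLength_le θ N)

end BlockLength

/-- **Lower bound for the `q`-SOS long-range chain at the critical exponent
`α = 2 + q/2`.** For every `β ∈ (0,∞)` and every `q ∈ (0,2)`, there exists `c_β > 0`
such that for every `N ≥ 2`,
`c_β N/(ln N)^{2/q} ≤ Var^{q-SOS}_{N,β,2+q/2}[φ(0)]`. -/
theorem qSOS_chain_lower_bound_alpha_critical
    (β : ℝ) (hβ : 0 < β) (q : ℝ) (hq₀ : 0 < q) (hq₂ : q < 2) :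
    ∃ c : ℝ, 0 < c ∧
      ∀ N : ℕ, 2 ≤ N →
        c * (N : ℝ) / (Real.log N) ^ ((2 : ℝ) / q) ≤ chainVar N β (2 + q / 2) q := by
  have hθ₀ : 0 < q / 2 := by positivity
  set K : ℝ := 1 + (Real.log 2 ^ (q / 2)⁻¹)⁻¹
  have hK : 0 < K := add_pos_of_pos_of_nonneg one_pos
    (inv_nonneg.2 (Real.rpow_nonneg (Real.log_nonneg one_le_two) _))
  set C : ℝ := 16 * β * (4 + (q / 2)⁻¹ + ∑' j : ℕ, ((j : ℝ) + 1) ^ (-(1 + q / 2)))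
  refine ⟨Real.exp (-C) / (3 * K), div_pos (Real.exp_pos _) (mul_pos three_pos hK), fun N hN => ?_⟩
  have hm : (N + 1) / blockLength (q / 2) N * blockLength (q / 2) N ≤ N + 1 :=
    Nat.div_mul_le_self _ _
  have hcount := div_rpow_log_le_cast_div_blockLength hθ₀ hN
  have hℓ := blockLength_pos (q / 2) hN
  rw [← inv_div q 2]
  calc Real.exp (-C) / (3 * K) * N / Real.log N ^ (q / 2)⁻¹
      = 2 / 3 * (N / (2 * (K * Real.log N ^ (q / 2)⁻¹)) * Real.exp (-C)) := by field_simp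
    _ ≤ 2 / 3 * (((N + 1) / blockLength (q / 2) N : ℕ) * Real.exp (-C)) := by gcongr
    _ ≤ chainVar N β (2 + q / 2) q :=
        le_chainVar_of_forall_sum_le hβ (by linarith) hq₀ hq₂ hℓ hm fun k S =>
          (sum_chainCoupling_mul_csCoeff_le hβ.le hθ₀ (by linarith) hℓ hm k S).trans
            (mul_le_mul_of_nonneg_left (add_le_add_left (rpow_neg_blockLength_mul_le hθ₀ hN) _)
              (by positivity))
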